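/- Let (s,u) be a global-in-time solution of problem (P) with initial data (s₀,φ) ∈ W. Then for every t ∈ (0,∞), E(s(t),u(t)) ≥ (π²/256) · ‖u(t)‖_{L¹}³ / (s(t) + ‖u(t)‖_{L¹})⁴ > 0. -/

import Mathlib

open Set MeasureTheory Filter Topology Real
open scoped ENNReal

noncomputable section

/-- `(s₀, φ)` belongs to the class `W`: `s₀ ∈ (0,∞)`, `φ` is Lipschitz on `[0,s₀]`,
not identically zero, nonnegative there, and vanishes at `s₀`. -/
def memW (s₀ : ℝ) (φ : ℝ → ℝ) : Prop :=
  0 < s₀ ∧ (∃ K : NNReal, LipschitzOnWith K φ (Icc 0 s₀)) ∧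
    (∃ x ∈ Icc 0 s₀, φ x ≠ 0) ∧ (∀ x ∈ Icc 0 s₀, 0 ≤ φ x) ∧ φ s₀ = 0

/-- `(s,u)` is a solution of the one-phase Stefan problem (P) on `(0,T]` (finite `T`)
with exponent `p` and initial data `(s₀,φ)`. -/
structure IsSolOn (p s₀ : ℝ) (φ : ℝ → ℝ) (T : ℝ) (s : ℝ → ℝ) (u : ℝ → ℝ → ℝ) : Prop where
  T_pos : 0 < T
  s_cont : ContinuousOn s (Icc 0 T)
  s_diff : ∀ t ∈ Ioc 0 T, DifferentiableAt ℝ s t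
  s_deriv_cont : ContinuousOn (deriv s) (Ioc 0 T)
  s_pos : ∀ t ∈ Icc 0 T, 0 < s t
  ut_diff : ∀ t ∈ Ioc 0 T, ∀ x ∈ Ioo 0 (s t), DifferentiableAt ℝ (fun τ => u τ x) t
  ux_diff : ∀ t ∈ Ioc 0 T, ∀ x ∈ Ioo 0 (s t), DifferentiableAt ℝ (u t) x
  uxx_diff : ∀ t ∈ Ioc 0 T, ∀ x ∈ Ioo 0 (s t), DifferentiableAt ℝ (deriv (u t)) x
  ut_cont : ContinuousOn (fun q : ℝ × ℝ => deriv (fun τ => u τ q.2) q.1)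
      {q : ℝ × ℝ | q.1 ∈ Ioc 0 T ∧ q.2 ∈ Ioo 0 (s q.1)}
  uxx_cont : ContinuousOn (fun q : ℝ × ℝ => deriv (deriv (u q.1)) q.2)
      {q : ℝ × ℝ | q.1 ∈ Ioc 0 T ∧ q.2 ∈ Ioo 0 (s q.1)}
  ux_cont : ContinuousOn (fun q : ℝ × ℝ => deriv (u q.1) q.2)
      {q : ℝ × ℝ | q.1 ∈ Ioc 0 T ∧ q.2 ∈ Icc 0 (s q.1)}
  u_cont : ContinuousOn (fun q : ℝ × ℝ => u q.1 q.2)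
      {q : ℝ × ℝ | q.1 ∈ Icc 0 T ∧ q.2 ∈ Icc 0 (s q.1)}
  u_nonneg : ∀ t ∈ Icc 0 T, ∀ x ∈ Icc 0 (s t), 0 ≤ u t x
  heat : ∀ t ∈ Ioc 0 T, ∀ x ∈ Ioo 0 (s t),
      deriv (fun τ => u τ x) t = deriv (deriv (u t)) x
  bc_zero : ∀ t ∈ Ioc 0 T, -deriv (u t) 0 = u t 0 ^ p
  bc_free : ∀ t ∈ Ioc 0 T, u t (s t) = 0
  stefan : ∀ t ∈ Ioc 0 T, deriv s t = -deriv (u t) (s t)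
  init : ∀ x ∈ Icc 0 s₀, u 0 x = φ x
  init_s : s 0 = s₀

/-- `(s,u)` is a global-in-time solution of problem (P). -/
def IsGlobalSol (p s₀ : ℝ) (φ : ℝ → ℝ) (s : ℝ → ℝ) (u : ℝ → ℝ → ℝ) : Prop :=
  ∀ T : ℝ, 0 < T → IsSolOn p s₀ φ T s u

/-- `Tm ∈ (0,∞]` is the maximal existence time of the solution `(s,u)` of (P) with
initial data `(s₀,φ)`: the solution exists on `(0,T]` for every `T < Tm`, and for
`T > Tm` problem (P) admits no solution on `(0,T]`. -/
def IsMaxSol (p s₀ : ℝ) (φ : ℝ → ℝ) (Tm : ℝ≥0∞) (s : ℝ → ℝ) (u : ℝ → ℝ → ℝ) : Prop :=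
  0 < Tm ∧
    (∀ T : ℝ, 0 < T → ENNReal.ofReal T < Tm → IsSolOn p s₀ φ T s u) ∧
    (∀ T : ℝ, Tm < ENNReal.ofReal T → ¬∃ σ v, IsSolOn p s₀ φ T σ v)

/-- The sup norm `‖u(t)‖_{L^∞(0,s(t))}`. -/
def supNorm (s : ℝ → ℝ) (u : ℝ → ℝ → ℝ) (t : ℝ) : ℝ :=
  sSup (u t '' Ioo 0 (s t))

/-- The `L¹` norm `‖u(t)‖_{L¹(0,s(t))}` of the nonnegative function `u(t,·)`. -/
def L1Norm (s : ℝ → ℝ) (u : ℝ → ℝ → ℝ) (t : ℝ) : ℝ :=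
  ∫ x in (0:ℝ)..(s t), u t x

/-- The energy `E(s(t),u(t))`. -/
def energy (p : ℝ) (s : ℝ → ℝ) (u : ℝ → ℝ → ℝ) (t : ℝ) : ℝ :=
  1 / 2 * (∫ x in (0:ℝ)..(s t), (deriv (u t) x) ^ 2) - u t 0 ^ (p + 1) / (p + 1)

/-!
After any time `ε > 0` the solution extends to a flow on the whole plane, and its enthalpy tail
`Z(t, x)`, the heat and latent heat to the right of `x`, satisfies `∂ₜZ = flux` and
`-∂ₓZ = u + 1_{x ≤ s}` across the free boundary. Testing the increments `Z(t + h) - Z(t)` with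
themselves, dividing by `h²` and letting `h → 0` gives the energy identity
`dE/dt = -∫ (∂ₜu)² - (s')³ / 2` in integrated form, with no regularity of `∂ₜu` at the boundary.
Three things follow.

* Hölder in time: `(s(t₂) - s(t₁))³ ≤ 2 (t₂ - t₁)² (E(t₁) - E(t₂))`.
* Levine concavity: for `K = ∫ u²` one has `K' = (p - 1) J - 2 (p + 1) E`, with `J` the Dirichlet
  integral, and `(ΔK)² ≤ 4 ∫ K · (E(t₁) - E(t₂))`. If `E` were ever negative, a negative power of
  the primitive of `K` would be concave and the solution would blow up; hence `E ≥ 0` for all time.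
* By a caloric barrier, the front has to advance by a fixed fraction of the mass `M = ‖u(t)‖₁`
  within a time comparable to `(s(t) + M)²`.

Combined, `E(t) ≥ E(t) - E(t₂) ≥ (Δs)³ / (2 (t₂ - t)²) ≥ c M³ / (s(t) + M)⁴`.
-/

/-! ### Calculus -/

section Calculus

lemma continuous_time_slice {g : ℝ → ℝ → ℝ} (hg : Continuous (Function.uncurry g)) (x : ℝ) :
    Continuous fun t => g t x :=
  hg.comp (Continuous.prodMk_left x)

lemma continuous_space_slice {g : ℝ → ℝ → ℝ} (hg : Continuous (Function.uncurry g)) (t : ℝ) :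
    Continuous (g t) :=
  hg.comp (Continuous.prodMk_right t)

lemma exists_abs_le_of_continuous_uncurry {g : ℝ → ℝ → ℝ} (hg : Continuous (Function.uncurry g))
    (a b c d : ℝ) : ∃ C, 0 < C ∧ ∀ t ∈ Icc a b, ∀ x ∈ Icc c d, |g t x| ≤ C := by
  obtain ⟨C, hC⟩ := ((isCompact_Icc (a := a) (b := b)).prod
    (isCompact_Icc (a := c) (b := d))).exists_bound_of_continuousOn hg.continuousOn
  exact ⟨max C 1, by positivity, fun t ht x hx => (hC (t, x) ⟨ht, hx⟩).trans (le_max_left _ _)⟩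

lemma hasDerivAt_mul_of_eq_zero {f g : ℝ → ℝ} {f' a : ℝ} (hf : HasDerivAt f f' a) (hfa : f a = 0)
    (hg : ContinuousAt g a) : HasDerivAt (fun t => f t * g t) (f' * g a) a := by
  rw [hasDerivAt_iff_tendsto_slope] at hf ⊢
  refine (hf.mul (hg.tendsto.mono_left nhdsWithin_le_nhds)).congr fun t => ?_
  simp only [slope_def_field, hfa]
  ring

lemma hasDerivAt_integral_of_abs_sub_le {F : ℝ → ℝ → ℝ} {F' : ℝ → ℝ} {a l r C : ℝ} {s : Set ℝ}
    (hlr : l ≤ r) (hF : ∀ᶠ b in 𝓝 a, IntervalIntegrable (F b) volume l r)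
    (hF' : IntervalIntegrable F' volume l r)
    (hlip : ∀ᶠ b in 𝓝 a, ∀ x ∈ Ioc l r, |F b x - F a x| ≤ C * |b - a|) (hs : s.Countable)
    (hderiv : ∀ x ∈ Ioc l r, x ∉ s → HasDerivAt (fun b => F b x) (F' x) a) :
    HasDerivAt (fun b => ∫ x in l..r, F b x) (∫ x in l..r, F' x) a := by
  let e := ContinuousLinearMap.toSpanSingletonCLE (𝕜 := ℝ) (E := ℝ)
  have hFa : IntervalIntegrable (F a) volume l r := hF.self_of_nhds
  obtain ⟨hint, key⟩ := hasFDerivAt_integral_of_dominated_loc_of_lip' (𝕜 := ℝ)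
    (μ := volume.restrict (Ioc l r)) (F := F) (x₀ := a) (bound := fun _ => C)
    (F' := fun x => e (F' x)) (hF.and hlip)
    (fun b hb => hb.1.1.aestronglyMeasurable) hFa.1
    (e.continuous.comp_aestronglyMeasurable hF'.1.aestronglyMeasurable)
    ((ae_restrict_iff' measurableSet_Ioc).2 (ae_of_all _ fun x hx b hb => hb.2 x hx))
    (integrable_const C) ((ae_restrict_iff' measurableSet_Ioc).2 <| by
      filter_upwards [hs.ae_notMem volume] with x hxs hx using (hderiv x hx hxs).hasFDerivAt)
  have hderiv_eq : (∫ x in Ioc l r, e (F' x)) 1 = ∫ x in Ioc l r, F' x := by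
    rw [ContinuousLinearMap.integral_apply hint]
    simp [e]
  simp only [intervalIntegral.integral_of_le hlr]
  exact key.hasDerivAt.congr_deriv hderiv_eq

lemma hasDerivAt_integral_moving_right {F : ℝ → ℝ → ℝ} {σ : ℝ → ℝ} {σ' a : ℝ}
    (hF : Continuous (Function.uncurry F)) (hσc : Continuous σ) (hσ : HasDerivAt σ σ' a) :
    HasDerivAt (fun b => ∫ y in (σ a)..(σ b), F b y) (σ' * F a (σ a)) a := by
  have hpath : Continuous fun q : ℝ × ℝ => F q.1 (σ a + (σ q.1 - σ a) * q.2) :=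
    hF.comp (by fun_prop : Continuous fun q : ℝ × ℝ => (q.1, σ a + (σ q.1 - σ a) * q.2))
  have hmean : Continuous fun b => ∫ θ in (0 : ℝ)..1, F b (σ a + (σ b - σ a) * θ) :=
    intervalIntegral.continuous_parametric_intervalIntegral_of_continuous' hpath _ _
  have hprod := hasDerivAt_mul_of_eq_zero (hσ.sub_const (σ a)) (sub_self _) hmean.continuousAt
  refine (hprod.congr_of_eventuallyEq (Eventually.of_forall fun b => ?_)).congr_deriv (by simp)
  simp

lemma hasDerivAt_integral_mul_sub {f ψ ψt : ℝ → ℝ → ℝ} (hf : Continuous (Function.uncurry f))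
    (hψ : Continuous (Function.uncurry ψ)) (hψt : Continuous (Function.uncurry ψt))
    (hderiv : ∀ t x, HasDerivAt (fun τ => ψ τ x) (ψt t x) t) {l r : ℝ} (hlr : l ≤ r) (t : ℝ) :
    HasDerivAt (fun b => ∫ x in l..r, f b x * (ψ b x - ψ t x)) (∫ x in l..r, f t x * ψt t x) t := by
  obtain ⟨A, hA, hfA⟩ := exists_abs_le_of_continuous_uncurry hf (t - 1) (t + 1) l r
  obtain ⟨B, -, hψtB⟩ := exists_abs_le_of_continuous_uncurry hψt (t - 1) (t + 1) l r
  have ht : t ∈ Icc (t - 1) (t + 1) := ⟨by linarith, by linarith⟩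
  refine hasDerivAt_integral_of_abs_sub_le (C := A * B) hlr (Eventually.of_forall fun b => ?_) ?_ ?_
    countable_empty fun x _ _ => ?_
  · exact ((continuous_space_slice hf b).mul ((continuous_space_slice hψ b).sub
      (continuous_space_slice hψ t))).intervalIntegrable _ _
  · exact ((continuous_space_slice hf t).mul (continuous_space_slice hψt t)).intervalIntegrable _ _
  · filter_upwards [Icc_mem_nhds (sub_one_lt t) (lt_add_one t)] with b hb x hx
    have hx' := Ioc_subset_Icc_self hx
    have hψlip : |ψ b x - ψ t x| ≤ B * |b - t| :=
      (convex_Icc (t - 1) (t + 1)).norm_image_sub_le_of_norm_hasDerivWithin_le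
        (f := fun τ => ψ τ x) (fun τ _ => (hderiv τ x).hasDerivWithinAt)
        (fun τ hτ => hψtB τ hτ x hx') ht hb
    calc |f b x * (ψ b x - ψ t x) - f t x * (ψ t x - ψ t x)| = |f b x| * |ψ b x - ψ t x| := by
          rw [sub_self, mul_zero, sub_zero, abs_mul]
      _ ≤ A * (B * |b - t|) := by gcongr; exact hfA b hb x hx'
      _ = A * B * |b - t| := by ring
  · simpa only [mul_comm] using hasDerivAt_mul_of_eq_zero ((hderiv t x).sub_const (ψ t x))
      (sub_self _) (continuous_time_slice hf x).continuousAt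

lemma integral_mul_deriv_eq_deriv_mul_off_countable {f g f' g' : ℝ → ℝ} {l r : ℝ} {s : Set ℝ}
    (hlr : l ≤ r) (hs : s.Countable) (hf : Continuous f) (hg : Continuous g)
    (hff' : ∀ x ∈ Ioo l r \ s, HasDerivAt f (f' x) x)
    (hgg' : ∀ x ∈ Ioo l r \ s, HasDerivAt g (g' x) x)
    (hf' : IntervalIntegrable f' volume l r) (hg' : IntervalIntegrable g' volume l r) :
    ∫ x in l..r, f x * g' x = f r * g r - f l * g l - ∫ x in l..r, f' x * g x := by
  have hi₁ := hf'.mul_continuousOn hg.continuousOn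
  have hi₂ := hg'.continuousOn_mul hf.continuousOn
  have key := integral_eq_of_hasDerivAt_off_countable (fun x => f x * g x) _ hs
    (hf.mul hg).continuousOn
    (fun x hx => by
      rw [min_eq_left hlr, max_eq_right hlr] at hx
      exact (hff' x hx).mul (hgg' x hx)) (hi₁.add hi₂)
  rw [intervalIntegral.integral_add hi₁ hi₂] at key
  linarith

lemma hasDerivAt_max_sub_zero {c x : ℝ} (hx : x ≠ c) :
    HasDerivAt (fun y => max (c - y) 0) (-(Iic c).indicator 1 x) x := by
  rcases hx.lt_or_gt with h | h
  · have hlin : HasDerivAt (fun y => c - y) (-1) x := by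
      simpa using (hasDerivAt_id x).const_sub c
    refine (hlin.congr_of_eventuallyEq ?_).congr_deriv (by simp [h.le])
    filter_upwards [gt_mem_nhds h] with y hy using max_eq_left (by linarith)
  · refine ((hasDerivAt_const x (0 : ℝ)).congr_of_eventuallyEq ?_).congr_deriv (by simp [h])
    filter_upwards [lt_mem_nhds h] with y hy using max_eq_right (by linarith)

lemma intervalIntegrable_indicator {f : ℝ → ℝ} {l r : ℝ} {s : Set ℝ} (hs : MeasurableSet s)
    (hf : IntervalIntegrable f volume l r) : IntervalIntegrable (s.indicator f) volume l r :=
  ⟨hf.1.indicator hs, hf.2.indicator hs⟩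

end Calculus

/-! ### A chain rule for Hölder continuous functions -/

/-- The Steklov average of `f` over the window `[t, t + h]`. -/
def steklovAverage (f : ℝ → ℝ) (h t : ℝ) : ℝ := (∫ τ in t..(t + h), f τ) / h

section HolderChainRule

variable {f : ℝ → ℝ}

lemma hasDerivAt_steklovAverage (hf : Continuous f) (h t : ℝ) :
    HasDerivAt (steklovAverage f h) ((f (t + h) - f t) / h) t := by
  have hprim : ∀ y, HasDerivAt (fun y => ∫ τ in (0 : ℝ)..y, f τ) (f y) y := fun y =>
    (hf.integral_hasStrictDerivAt 0 y).hasDerivAt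
  refine ((((hprim (t + h)).comp_add_const t h).sub (hprim t)).div_const h).congr_of_eventuallyEq
    (Eventually.of_forall fun y => ?_)
  exact congrArg (· / h) (intervalIntegral.integral_interval_sub_left
    (hf.intervalIntegrable _ _) (hf.intervalIntegrable _ _)).symm

lemma continuous_steklovAverage (hf : Continuous f) (h : ℝ) : Continuous (steklovAverage f h) :=
  continuous_iff_continuousAt.2 fun t => (hasDerivAt_steklovAverage hf h t).continuousAt

lemma tendsto_steklovAverage (hf : Continuous f) (t : ℝ) :
    Tendsto (fun h => steklovAverage f h t) (𝓝[>] 0) (𝓝 (f t)) := by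
  refine (hf.integral_hasStrictDerivAt t t).hasDerivAt.tendsto_slope_zero_right.congr fun h => ?_
  rw [intervalIntegral.integral_same, sub_zero, smul_eq_mul, steklovAverage, inv_mul_eq_div]

lemma steklovAverage_mem_Icc (hf : Continuous f) {h t a b : ℝ} (hh : 0 < h)
    (hab : ∀ τ ∈ Icc t (t + h), f τ ∈ Icc a b) : steklovAverage f h t ∈ Icc a b := by
  have ht : t ≤ t + h := by linarith
  have hlow := intervalIntegral.integral_mono_on (μ := volume) ht intervalIntegrable_const
    (hf.intervalIntegrable _ _) fun τ hτ => (hab τ hτ).1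
  have hupp := intervalIntegral.integral_mono_on (μ := volume) ht (hf.intervalIntegrable _ _)
    intervalIntegrable_const fun τ hτ => (hab τ hτ).2
  rw [intervalIntegral.integral_const, smul_eq_mul, add_sub_cancel_left, mul_comm] at hlow hupp
  exact ⟨(le_div_iff₀ hh).2 hlow, (div_le_iff₀ hh).2 hupp⟩

lemma steklovAverage_linearization {g : ℝ → ℝ} (hf : Continuous f) (hg : Continuous g) {h : ℝ}
    (hh : h ≠ 0) (t c : ℝ) :
    steklovAverage (fun τ => g (f τ) - g (steklovAverage f h t)
        - c * (f τ - steklovAverage f h t)) h t =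
      steklovAverage (fun τ => g (f τ)) h t - g (steklovAverage f h t) := by
  have igf : IntervalIntegrable (fun τ => g (f τ)) volume t (t + h) :=
    (hg.comp hf).intervalIntegrable _ _
  have jf : IntervalIntegrable f volume t (t + h) := hf.intervalIntegrable _ _
  simp only [steklovAverage]
  rw [intervalIntegral.integral_sub (igf.sub intervalIntegrable_const)
      ((jf.sub intervalIntegrable_const).const_mul _),
    intervalIntegral.integral_sub igf intervalIntegrable_const,
    intervalIntegral.integral_const_mul,
    intervalIntegral.integral_sub jf intervalIntegrable_const]
  simp only [intervalIntegral.integral_const, smul_eq_mul, add_sub_cancel_left]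
  field_simp
  ring

lemma abs_sub_linearization_le {g g' : ℝ → ℝ} {κ m y : ℝ} (hg : ∀ z, HasDerivAt g (g' z) z)
    (hκ : ∀ z ∈ uIcc m y, |g' z - g' m| ≤ κ) : |g y - g m - g' m * (y - m)| ≤ κ * |y - m| := by
  have key := (convex_uIcc m y).norm_image_sub_le_of_norm_hasDerivWithin_le
    (f := fun z => g z - g' m * z) (f' := fun z => g' z - g' m * 1)
    (fun z _ => ((hg z).sub ((hasDerivAt_id z).const_mul (g' m))).hasDerivWithinAt)
    (fun z hz => by simpa only [mul_one, Real.norm_eq_abs] using hκ z hz)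
    left_mem_uIcc right_mem_uIcc
  simp only [Real.norm_eq_abs] at key
  convert key using 2
  ring

/-- The first-order term of `g ∘ f` around the average of `f` averages to zero. -/
lemma abs_steklovAverage_comp_sub_le {g g' : ℝ → ℝ} (hf : Continuous f)
    (hg : ∀ y, HasDerivAt g (g' y) y) {h t a b r κ : ℝ} (hh : 0 < h) (hκ : 0 ≤ κ)
    (hab : ∀ τ ∈ Icc t (t + h), f τ ∈ Icc a b) (hr : ∀ τ ∈ Icc t (t + h), |f τ - f t| ≤ r)
    (hg' : ∀ y ∈ Icc a b, ∀ m ∈ Icc a b, |y - m| ≤ 2 * r → |g' y - g' m| ≤ κ) :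
    |steklovAverage (fun τ => g (f τ)) h t - g (steklovAverage f h t)| ≤ κ * (2 * r) := by
  have hgc : Continuous g := continuous_iff_continuousAt.2 fun y => (hg y).continuousAt
  set m := steklovAverage f h t
  have hmab : m ∈ Icc a b := steklovAverage_mem_Icc hf hh hab
  have hmr : m ∈ Icc (f t - r) (f t + r) := steklovAverage_mem_Icc hf hh fun τ hτ => by
    obtain ⟨hl, hu⟩ := abs_le.1 (hr τ hτ)
    constructor <;> linarith
  rw [← steklovAverage_linearization hf hgc hh.ne' t (g' m), abs_le]
  refine steklovAverage_mem_Icc (by fun_prop) hh fun τ hτ => abs_le.1 ?_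
  have hτm : |f τ - m| ≤ 2 * r := by
    obtain ⟨hl, hu⟩ := abs_le.1 (hr τ hτ)
    exact abs_le.2 ⟨by linarith [hmr.2], by linarith [hmr.1]⟩
  refine (abs_sub_linearization_le hg fun z hz => ?_).trans (by gcongr)
  refine hg' z ((convex_Icc a b).ordConnected.uIcc_subset hmab (hab τ hτ) hz) m hmab ?_
  exact (abs_sub_left_of_mem_uIcc hz).trans hτm

lemma eventually_abs_mul_steklovAverage_comp_sub_le {g g' : ℝ → ℝ} {t₁ t₂ C κ : ℝ}
    (hf : Continuous f) (hg : ∀ y, HasDerivAt g (g' y) y) (hg' : Continuous g') (hC : 0 < C)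
    (hol : ∀ t ∈ Icc t₁ t₂, ∀ h ∈ Ioo (0 : ℝ) 1, |f (t + h) - f t| ≤ C * √h) (hκ : 0 < κ) :
    ∀ᶠ h in 𝓝[>] 0, ∀ t ∈ Icc t₁ t₂, |(f (t + h) - f t) / h *
      (steklovAverage (fun τ => g (f τ)) h t - g (steklovAverage f h t))| ≤ κ := by
  obtain ⟨M, hM⟩ := (isCompact_Icc : IsCompact (Icc t₁ (t₂ + 1))).exists_bound_of_continuousOn
    hf.continuousOn
  obtain ⟨δ, hδ, hg'δ⟩ := Metric.uniformContinuousOn_iff.1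
    ((isCompact_Icc : IsCompact (Icc (-M) M)).uniformContinuousOn_of_continuous hg'.continuousOn)
    (κ / (2 * C ^ 2)) (by positivity)
  have hsqrt : Tendsto (fun h => 2 * (C * √h)) (𝓝[>] 0) (𝓝 0) := by
    refine ((Continuous.tendsto' ?_ 0 0 (by simp)).mono_left nhdsWithin_le_nhds)
    fun_prop
  filter_upwards [Ioo_mem_nhdsGT one_pos, hsqrt.eventually_lt_const hδ] with h hh hhδ t ht
  have hh0 := hh.1
  have near : ∀ τ ∈ Icc t (t + h), |f τ - f t| ≤ C * √h := fun τ hτ => by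
    rcases hτ.1.eq_or_lt with rfl | hlt
    · rw [sub_self, abs_zero]
      positivity
    · have key := hol t ht (τ - t) ⟨by linarith, by linarith [hτ.2, hh.2]⟩
      rw [add_sub_cancel] at key
      exact key.trans (by gcongr; linarith [hτ.2])
  have err := abs_steklovAverage_comp_sub_le (κ := κ / (2 * C ^ 2)) hf hg hh0 (by positivity)
    (fun τ hτ => abs_le.1 (hM τ ⟨ht.1.trans hτ.1, by linarith [hτ.2, ht.2, hh.2]⟩)) near
    (fun y hy m hm hym => (hg'δ y hy m hm (hym.trans_lt hhδ)).le)
  rw [abs_mul, abs_div, abs_of_pos hh0]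
  calc _ ≤ C * √h / h * (κ / (2 * C ^ 2) * (2 * (C * √h))) := by
        gcongr
        exact hol t ht h hh
    _ = κ * (√h * √h / h) := by field_simp
    _ = κ := by rw [Real.mul_self_sqrt hh0.le, div_self hh0.ne', mul_one]

lemma tendsto_integral_mul_steklovAverage_comp_sub {g g' : ℝ → ℝ} {t₁ t₂ C : ℝ}
    (hf : Continuous f) (hg : ∀ y, HasDerivAt g (g' y) y) (hg' : Continuous g') (h₁₂ : t₁ ≤ t₂)
    (hC : 0 < C) (hol : ∀ t ∈ Icc t₁ t₂, ∀ h ∈ Ioo (0 : ℝ) 1, |f (t + h) - f t| ≤ C * √h) :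
    Tendsto (fun h => ∫ t in t₁..t₂, (f (t + h) - f t) / h *
      (steklovAverage (fun τ => g (f τ)) h t - g (steklovAverage f h t))) (𝓝[>] 0) (𝓝 0) := by
  have hgc : Continuous g := continuous_iff_continuousAt.2 fun y => (hg y).continuousAt
  have hsmall := fun κ (hκ : 0 < κ) =>
    eventually_abs_mul_steklovAverage_comp_sub_le hf hg hg' hC hol hκ
  have hmem : ∀ t ∈ uIoc t₁ t₂, t ∈ Icc t₁ t₂ := fun t ht =>
    Ioc_subset_Icc_self (uIoc_of_le h₁₂ ▸ ht)
  have hzero : ∫ _ in t₁..t₂, (0 : ℝ) = 0 := intervalIntegral.integral_zero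
  suffices hlim : Tendsto _ _ (𝓝 (∫ _ in t₁..t₂, (0 : ℝ))) by rwa [hzero] at hlim
  refine intervalIntegral.tendsto_integral_filter_of_dominated_convergence (fun _ => 1)
    (Eventually.of_forall fun h => Continuous.aestronglyMeasurable ?_) ?_
    intervalIntegrable_const ?_
  · exact (by fun_prop : Continuous fun t => (f (t + h) - f t) / h).mul
      ((continuous_steklovAverage (hgc.comp hf) h).sub
        (hgc.comp (continuous_steklovAverage hf h)))
  · filter_upwards [hsmall 1 one_pos] with h hh using ae_of_all _ fun t ht => hh t (hmem t ht)
  · refine ae_of_all _ fun t ht => Metric.tendsto_nhds.2 fun κ hκ => ?_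
    filter_upwards [hsmall (κ / 2) (half_pos hκ)] with h hh
    rw [Real.dist_0_eq_abs]
    linarith [hh t (hmem t ht)]

lemma tendsto_integral_differenceQuotient_mul_steklovAverage {g g' P : ℝ → ℝ} {t₁ t₂ C : ℝ}
    (hf : Continuous f) (hg : ∀ y, HasDerivAt g (g' y) y) (hg' : Continuous g')
    (hP : ∀ y, HasDerivAt P (g y) y) (h₁₂ : t₁ ≤ t₂) (hC : 0 < C)
    (hol : ∀ t ∈ Icc t₁ t₂, ∀ h ∈ Ioo (0 : ℝ) 1, |f (t + h) - f t| ≤ C * √h) :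
    Tendsto (fun h => ∫ t in t₁..t₂,
        (f (t + h) - f t) / h * steklovAverage (fun τ => g (f τ)) h t)
      (𝓝[>] 0) (𝓝 (P (f t₂) - P (f t₁))) := by
  have hgc : Continuous g := continuous_iff_continuousAt.2 fun y => (hg y).continuousAt
  have hPc : Continuous P := continuous_iff_continuousAt.2 fun y => (hP y).continuousAt
  have hquot : ∀ h, Continuous fun t => (f (t + h) - f t) / h := fun h => by fun_prop
  have hgF : ∀ h, Continuous fun t => g (steklovAverage f h t) := fun h =>
    hgc.comp (continuous_steklovAverage hf h)
  have imain : ∀ h, IntervalIntegrable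
      (fun t => g (steklovAverage f h t) * ((f (t + h) - f t) / h)) volume t₁ t₂ := fun h =>
    ((hgF h).mul (hquot h)).intervalIntegrable _ _
  have ierr : ∀ h, IntervalIntegrable (fun t => (f (t + h) - f t) / h *
      (steklovAverage (fun τ => g (f τ)) h t - g (steklovAverage f h t))) volume t₁ t₂ := fun h =>
    ((hquot h).mul ((continuous_steklovAverage (hgc.comp hf) h).sub
      (hgF h))).intervalIntegrable _ _
  have hmain : ∀ h, ∫ t in t₁..t₂, g (steklovAverage f h t) * ((f (t + h) - f t) / h) =
      P (steklovAverage f h t₂) - P (steklovAverage f h t₁) := fun h =>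
    intervalIntegral.integral_eq_sub_of_hasDerivAt
      (fun t _ => (hP _).comp t (hasDerivAt_steklovAverage hf h t)) (imain h)
  have hlim := (((hPc.tendsto _).comp (tendsto_steklovAverage hf t₂)).sub
    ((hPc.tendsto _).comp (tendsto_steklovAverage hf t₁))).add
    (tendsto_integral_mul_steklovAverage_comp_sub hf hg hg' h₁₂ hC hol)
  rw [add_zero] at hlim
  refine hlim.congr fun h => ?_
  rw [Function.comp_apply, Function.comp_apply, ← hmain,
    ← intervalIntegral.integral_add (imain h) (ierr h)]
  congr 1 with t
  ring

end HolderChainRule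

/-! ### The flow and its enthalpy -/

/-- A one-phase Stefan flow after time `ε`: front `S`, temperature `W ≥ 0` vanishing beyond the
front, flux `v = -∂ₓW` and boundary flux `v(t,0) = W(t,0)ᵖ`. All functions are defined and
continuous for every `t` and `x`, and the heat equation is encoded by its integrated form
`balance`, so that no regularity of `∂ₜW` or `∂ₓ²W` up to the boundary enters. -/
structure StefanFlow (ε p : ℝ) (S : ℝ → ℝ) (W v : ℝ → ℝ → ℝ) : Prop where
  continuous_front : Continuous S
  front_pos : ∀ t, 0 < S t
  monotone_front : Monotone S
  hasDerivAt_front : ∀ t, ε < t → HasDerivAt S (v t (S t)) t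
  continuous_temp : Continuous (Function.uncurry W)
  continuous_flux : Continuous (Function.uncurry v)
  temp_nonneg : ∀ t x, 0 ≤ W t x
  temp_eq_zero : ∀ t x, S t ≤ x → W t x = 0
  hasDerivAt_temp : ∀ t, ∀ x ∈ Ioo 0 (S t), HasDerivAt (W t) (-(v t x)) x
  flux_zero : ∀ t, v t 0 = W t 0 ^ p
  balance : ∀ a b, ε < a → a ≤ b → ∀ x ∈ Icc 0 (S a),
    ∫ y in (0 : ℝ)..x, (W b y - W a y) = ∫ τ in a..b, (v τ 0 - v τ x)

/-- The enthalpy (heat plus latent heat) to the right of `x` at time `t`. It satisfies `∂ₜZ = V`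
and `∂ₓZ = -W - 1_{x ≤ S}` across the front, where `V` is the flux extended by zero. -/
def enthalpyTail (S : ℝ → ℝ) (W : ℝ → ℝ → ℝ) (t x : ℝ) : ℝ :=
  (∫ y in x..S t, W t y) + max (S t - x) 0

/-- The flux `v` extended by zero beyond the front. -/
def extendedFlux (S : ℝ → ℝ) (v : ℝ → ℝ → ℝ) (t : ℝ) : ℝ → ℝ := (Iic (S t)).indicator (v t)

section ExtendedFlux

variable {S : ℝ → ℝ} {v : ℝ → ℝ → ℝ}

lemma extendedFlux_of_le {t x : ℝ} (h : x ≤ S t) : extendedFlux S v t x = v t x :=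
  indicator_of_mem (mem_Iic.2 h) _

lemma extendedFlux_of_lt {t x : ℝ} (h : S t < x) : extendedFlux S v t x = 0 :=
  indicator_of_notMem (notMem_Iic.2 h) _

lemma abs_extendedFlux_le {C t x : ℝ} (h : |v t x| ≤ C) : |extendedFlux S v t x| ≤ C :=
  (norm_indicator_le_norm_self (v t) x).trans h

lemma extendedFlux_time_eq_indicator (x : ℝ) :
    (fun t => extendedFlux S v t x) = {t | x ≤ S t}.indicator fun t => v t x := by
  ext t
  simp [extendedFlux, indicator]

end ExtendedFlux

namespace StefanFlow

variable {ε p : ℝ} {S : ℝ → ℝ} {W v : ℝ → ℝ → ℝ}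

lemma continuous_temp_space (H : StefanFlow ε p S W v) (t : ℝ) : Continuous (W t) :=
  continuous_space_slice H.continuous_temp t

lemma continuous_temp_time (H : StefanFlow ε p S W v) (x : ℝ) : Continuous fun t => W t x :=
  continuous_time_slice H.continuous_temp x

lemma continuous_flux_space (H : StefanFlow ε p S W v) (t : ℝ) : Continuous (v t) :=
  continuous_space_slice H.continuous_flux t

lemma continuous_flux_time (H : StefanFlow ε p S W v) (x : ℝ) : Continuous fun t => v t x :=
  continuous_time_slice H.continuous_flux x

lemma integral_temp_eq_zero (H : StefanFlow ε p S W v) {t x y : ℝ} (hx : S t ≤ x) (hy : S t ≤ y) :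
    ∫ z in x..y, W t z = 0 := by
  rw [intervalIntegral.integral_congr fun z hz => H.temp_eq_zero t z ((le_min hx hy).trans hz.1)]
  exact intervalIntegral.integral_zero

lemma enthalpyTail_eq_zero (H : StefanFlow ε p S W v) {t x : ℝ} (hx : S t ≤ x) :
    enthalpyTail S W t x = 0 := by
  rw [enthalpyTail, H.integral_temp_eq_zero hx le_rfl, max_eq_right (by linarith), add_zero]

lemma continuous_enthalpyTail_time (H : StefanFlow ε p S W v) (x : ℝ) :
    Continuous fun t => enthalpyTail S W t x :=
  (intervalIntegral.continuous_parametric_intervalIntegral_of_continuous H.continuous_temp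
    H.continuous_front).add ((H.continuous_front.sub continuous_const).max continuous_const)

lemma hasDerivAt_integral_temp (H : StefanFlow ε p S W v) (t x : ℝ) :
    HasDerivAt (fun x => ∫ y in x..S t, W t y) (-(W t x)) x :=
  have hW := H.continuous_temp_space t
  intervalIntegral.integral_hasDerivAt_left (hW.intervalIntegrable _ _)
    (hW.stronglyMeasurableAtFilter _ _) hW.continuousAt

lemma continuous_enthalpyTail_space (H : StefanFlow ε p S W v) (t : ℝ) :
    Continuous (enthalpyTail S W t) :=
  Continuous.add (continuous_iff_continuousAt.2 fun x =>
    (H.hasDerivAt_integral_temp t x).continuousAt) (by fun_prop)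

lemma hasDerivAt_enthalpyTail_space (H : StefanFlow ε p S W v) {t x : ℝ} (hx : x ≠ S t) :
    HasDerivAt (enthalpyTail S W t) (-(W t x) - (Iic (S t)).indicator 1 x) x :=
  (H.hasDerivAt_integral_temp t x).add (hasDerivAt_max_sub_zero hx)

lemma hasDerivAt_integral_past_front (H : StefanFlow ε p S W v) {a : ℝ} (ha : ε < a) :
    HasDerivAt (fun b => ∫ y in (S a)..(S b), W b y) 0 a := by
  refine (hasDerivAt_integral_moving_right H.continuous_temp H.continuous_front
    (H.hasDerivAt_front a ha)).congr_deriv ?_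
  rw [H.temp_eq_zero a _ le_rfl, mul_zero]

lemma enthalpyTail_sub (H : StefanFlow ε p S W v) {a b x : ℝ} (ha : ε < a) (hab : a ≤ b)
    (hx : x ∈ Icc 0 (S a)) :
    enthalpyTail S W b x - enthalpyTail S W a x =
      (∫ τ in a..b, (v τ x - v τ (S a))) + (∫ y in (S a)..(S b), W b y) + (S b - S a) := by
  have hS := H.monotone_front hab
  have hbal := H.balance a b ha hab x hx
  have hbalS := H.balance a b ha hab (S a) ⟨(H.front_pos a).le, le_rfl⟩
  have iW : ∀ t y z, IntervalIntegrable (W t) volume y z :=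
    fun t y z => (H.continuous_temp_space t).intervalIntegrable _ _
  have iv : ∀ x, IntervalIntegrable (fun t => v t x) volume a b :=
    fun x => (H.continuous_flux_time x).intervalIntegrable _ _
  rw [intervalIntegral.integral_sub (iW _ _ _) (iW _ _ _),
    intervalIntegral.integral_sub (iv _) (iv _)] at hbal hbalS
  have hbx := intervalIntegral.integral_add_adjacent_intervals (iW b 0 x) (iW b x (S b))
  have hbS := intervalIntegral.integral_add_adjacent_intervals (iW b 0 (S a)) (iW b (S a) (S b))
  have hax := intervalIntegral.integral_add_adjacent_intervals (iW a 0 x) (iW a x (S a))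
  rw [intervalIntegral.integral_sub (iv _) (iv _), enthalpyTail, enthalpyTail,
    max_eq_left (by linarith [hx.2]), max_eq_left (by linarith [hx.2])]
  linarith

lemma hasDerivWithinAt_enthalpyTail_time (H : StefanFlow ε p S W v) {a x : ℝ} (ha : ε < a)
    (hx : 0 ≤ x) :
    HasDerivWithinAt (fun t => enthalpyTail S W t x) (extendedFlux S v a x) (Ioi a) a := by
  rcases le_or_gt x (S a) with h | h
  · have hflux : HasDerivAt (fun b => ∫ τ in a..b, (v τ x - v τ (S a))) (v a x - v a (S a)) a :=
      (((H.continuous_flux_time x).sub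
        (H.continuous_flux_time (S a))).integral_hasStrictDerivAt a a).hasDerivAt
    have hsum := ((hflux.add (H.hasDerivAt_integral_past_front ha)).add
      ((H.hasDerivAt_front a ha).sub_const (S a))).const_add (enthalpyTail S W a x)
    rw [add_zero, sub_add_cancel, ← extendedFlux_of_le (v := v) h] at hsum
    refine hsum.hasDerivWithinAt.congr (fun b hb => ?_) (by simp)
    exact sub_eq_iff_eq_add'.1 (H.enthalpyTail_sub ha (le_of_lt hb) ⟨hx, h⟩)
  · rw [extendedFlux_of_lt h]
    refine ((hasDerivAt_const a (0 : ℝ)).congr_of_eventuallyEq ?_).hasDerivWithinAt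
    filter_upwards [H.continuous_front.continuousAt.eventually_lt_const h] with b hb
    exact H.enthalpyTail_eq_zero hb.le

lemma stronglyMeasurable_extendedFlux_time (H : StefanFlow ε p S W v) (x : ℝ) :
    StronglyMeasurable fun t => extendedFlux S v t x := by
  rw [extendedFlux_time_eq_indicator]
  exact (H.continuous_flux_time x).stronglyMeasurable.indicator
    (isClosed_le continuous_const H.continuous_front).measurableSet

lemma intervalIntegrable_extendedFlux_time (H : StefanFlow ε p S W v) (x a b : ℝ) :
    IntervalIntegrable (fun t => extendedFlux S v t x) volume a b := by
  rw [extendedFlux_time_eq_indicator]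
  exact intervalIntegrable_indicator (isClosed_le continuous_const H.continuous_front).measurableSet
    ((H.continuous_flux_time x).intervalIntegrable _ _)

lemma intervalIntegrable_extendedFlux (H : StefanFlow ε p S W v) (t a b : ℝ) :
    IntervalIntegrable (extendedFlux S v t) volume a b :=
  intervalIntegrable_indicator measurableSet_Iic
    ((H.continuous_flux_space t).intervalIntegrable _ _)

lemma integral_extendedFlux_time (H : StefanFlow ε p S W v) {a b x : ℝ} (ha : ε < a) (hab : a ≤ b)
    (hx : 0 ≤ x) :
    ∫ τ in a..b, extendedFlux S v τ x = enthalpyTail S W b x - enthalpyTail S W a x :=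
  intervalIntegral.integral_eq_sub_of_hasDeriv_right_of_le hab
    (H.continuous_enthalpyTail_time x).continuousOn
    (fun _ hτ => H.hasDerivWithinAt_enthalpyTail_time (ha.trans hτ.1) hx)
    (H.intervalIntegrable_extendedFlux_time x a b)

lemma continuousAt_extendedFlux_time (H : StefanFlow ε p S W v) {t x : ℝ} (hx : x ≠ S t) :
    ContinuousAt (fun t => extendedFlux S v t x) t := by
  rcases hx.lt_or_gt with h | h
  · refine (H.continuous_flux_time x).continuousAt.congr ?_
    filter_upwards [H.continuous_front.continuousAt.eventually_const_lt h] with b hb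
    exact (extendedFlux_of_le hb.le).symm
  · refine (continuousAt_const (y := (0 : ℝ))).congr ?_
    filter_upwards [H.continuous_front.continuousAt.eventually_lt_const h] with b hb
    exact (extendedFlux_of_lt hb).symm

lemma hasDerivAt_enthalpyTail_time (H : StefanFlow ε p S W v) {t x : ℝ} (ht : ε < t) (hx : 0 ≤ x)
    (hxS : x ≠ S t) : HasDerivAt (fun t => enthalpyTail S W t x) (extendedFlux S v t x) t := by
  obtain ⟨a, ha, hat⟩ := exists_between ht
  have hprim := intervalIntegral.integral_hasDerivAt_right
    (H.intervalIntegrable_extendedFlux_time x a t)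
    (H.stronglyMeasurable_extendedFlux_time x).stronglyMeasurableAtFilter
    (H.continuousAt_extendedFlux_time hxS)
  refine (hprim.const_add (enthalpyTail S W a x)).congr_of_eventuallyEq ?_
  filter_upwards [lt_mem_nhds hat] with b hb
  rw [H.integral_extendedFlux_time ha (le_of_lt hb) hx, add_sub_cancel]

lemma abs_enthalpyTail_sub_le (H : StefanFlow ε p S W v) {T R C : ℝ}
    (hv : ∀ t ∈ Icc ε T, ∀ x ∈ Icc 0 R, |v t x| ≤ C) {a b x : ℝ} (ha : a ∈ Ioc ε T)
    (hb : b ∈ Ioc ε T) (hx : x ∈ Icc 0 R) :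
    |enthalpyTail S W b x - enthalpyTail S W a x| ≤ C * |b - a| := by
  wlog hab : a ≤ b generalizing a b
  · rw [abs_sub_comm, abs_sub_comm b a]
    exact this hb ha (le_of_not_ge hab)
  rw [← H.integral_extendedFlux_time ha.1 hab hx.1, ← Real.norm_eq_abs]
  refine intervalIntegral.norm_integral_le_of_norm_le_const fun τ hτ => ?_
  rw [uIoc_of_le hab] at hτ
  exact abs_extendedFlux_le (hv τ ⟨(ha.1.trans hτ.1).le, hτ.2.trans hb.2⟩ x hx)

lemma hasDerivAt_temp_space (H : StefanFlow ε p S W v) {t x : ℝ} (hx : 0 < x) (hxS : x ≠ S t) :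
    HasDerivAt (W t) (-(extendedFlux S v t x)) x := by
  rcases hxS.lt_or_gt with h | h
  · rw [extendedFlux_of_le h.le]
    exact H.hasDerivAt_temp t x ⟨hx, h⟩
  · rw [extendedFlux_of_lt h, neg_zero]
    refine (hasDerivAt_const x (0 : ℝ)).congr_of_eventuallyEq ?_
    filter_upwards [lt_mem_nhds h] with y hy using H.temp_eq_zero t y (le_of_lt hy)

lemma integral_mul_enthalpyTail_deriv (H : StefanFlow ε p S W v) {Ψ ψ : ℝ → ℝ} {t R : ℝ}
    {s : Set ℝ} (hs : s.Countable) (hR : S t ≤ R) (hΨ : Continuous Ψ)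
    (hderiv : ∀ x ∈ Ioo 0 R \ s, HasDerivAt Ψ (ψ x) x) (hψ : IntervalIntegrable ψ volume 0 R) :
    (∫ x in (0 : ℝ)..R, Ψ x * W t x) + ∫ x in (0 : ℝ)..S t, Ψ x =
      Ψ 0 * enthalpyTail S W t 0 + ∫ x in (0 : ℝ)..R, ψ x * enthalpyTail S W t x := by
  have hS := H.front_pos t
  have iI : IntervalIntegrable ((Iic (S t)).indicator (1 : ℝ → ℝ)) volume 0 R :=
    intervalIntegrable_indicator measurableSet_Iic intervalIntegrable_const
  have iW : IntervalIntegrable (W t) volume 0 R :=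
    (H.continuous_temp_space t).intervalIntegrable _ _
  have key := integral_mul_deriv_eq_deriv_mul_off_countable (hS.le.trans hR)
    (hs.insert (S t)) hΨ (H.continuous_enthalpyTail_space t)
    (fun x hx => hderiv x ⟨hx.1, fun h => hx.2 (mem_insert_of_mem _ h)⟩)
    (fun x hx => H.hasDerivAt_enthalpyTail_space fun h => hx.2 (h ▸ mem_insert _ _))
    hψ (iW.neg.sub iI)
  have hlatent : ∫ x in (0 : ℝ)..R, Ψ x * (Iic (S t)).indicator 1 x = ∫ x in (0 : ℝ)..S t, Ψ x := by
    rw [← intervalIntegral.integral_indicator (f := Ψ) ⟨hS.le, hR⟩]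
    congr 1 with x
    by_cases h : x ≤ S t <;> simp [h]
  have hsplit : ∫ x in (0 : ℝ)..R, Ψ x * (-W t x - (Iic (S t)).indicator 1 x) =
      -(∫ x in (0 : ℝ)..R, Ψ x * W t x) - ∫ x in (0 : ℝ)..S t, Ψ x := by
    have iΨW : IntervalIntegrable (fun x => -(Ψ x * W t x)) volume 0 R :=
      (iW.continuousOn_mul hΨ.continuousOn).neg
    simp only [mul_sub, mul_neg]
    rw [intervalIntegral.integral_sub iΨW (iI.continuousOn_mul hΨ.continuousOn),
      intervalIntegral.integral_neg, hlatent]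
  rw [hsplit, H.enthalpyTail_eq_zero hR] at key
  linarith

lemma integral_mul_temp_sub (H : StefanFlow ε p S W v) {Ψ ψ : ℝ → ℝ} {a b R : ℝ}
    {s : Set ℝ} (hs : s.Countable) (ha : S a ≤ R) (hb : S b ≤ R) (hΨ : Continuous Ψ)
    (hderiv : ∀ x ∈ Ioo 0 R \ s, HasDerivAt Ψ (ψ x) x) (hψ : IntervalIntegrable ψ volume 0 R) :
    ∫ x in (0 : ℝ)..R, Ψ x * (W b x - W a x) =
      Ψ 0 * (enthalpyTail S W b 0 - enthalpyTail S W a 0)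
        + (∫ x in (0 : ℝ)..R, ψ x * (enthalpyTail S W b x - enthalpyTail S W a x))
        - ∫ x in (S a)..(S b), Ψ x := by
  have eb := H.integral_mul_enthalpyTail_deriv hs hb hΨ hderiv hψ
  have ea := H.integral_mul_enthalpyTail_deriv hs ha hΨ hderiv hψ
  have iW : ∀ t, IntervalIntegrable (fun x => Ψ x * W t x) volume 0 R := fun t =>
    (hΨ.mul (H.continuous_temp_space t)).intervalIntegrable _ _
  have iZ : ∀ t, IntervalIntegrable (fun x => ψ x * enthalpyTail S W t x) volume 0 R := fun t =>
    hψ.mul_continuousOn (H.continuous_enthalpyTail_space t).continuousOn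
  have hlatent := intervalIntegral.integral_interval_sub_left
    (hΨ.intervalIntegrable (μ := volume) 0 (S b)) (hΨ.intervalIntegrable (μ := volume) 0 (S a))
  simp only [mul_sub]
  rw [intervalIntegral.integral_sub (iW b) (iW a), intervalIntegral.integral_sub (iZ b) (iZ a)]
  linarith

end StefanFlow

/-! ### Time derivatives of integral quantities -/

/-- A test function `ψ(t,x)` together with its continuous derivatives `∂ₜψ`, `∂ₓψ`, `∂ₓ²ψ`. -/
structure IsTestFunction (ψ ψt ψx ψxx : ℝ → ℝ → ℝ) : Prop where
  continuous_self : Continuous (Function.uncurry ψ)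
  continuous_time : Continuous (Function.uncurry ψt)
  continuous_space : Continuous (Function.uncurry ψx)
  continuous_space_two : Continuous (Function.uncurry ψxx)
  hasDerivAt_time : ∀ t x, HasDerivAt (fun τ => ψ τ x) (ψt t x) t
  hasDerivAt_space : ∀ t x, HasDerivAt (ψ t) (ψx t x) x
  hasDerivAt_space_two : ∀ t x, HasDerivAt (ψx t) (ψxx t x) x

namespace StefanFlow

variable {ε p : ℝ} {S : ℝ → ℝ} {W v : ℝ → ℝ → ℝ}

lemma extendedFlux_zero (H : StefanFlow ε p S W v) (t : ℝ) : extendedFlux S v t 0 = W t 0 ^ p := by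
  rw [extendedFlux_of_le (H.front_pos t).le, H.flux_zero]

lemma integral_mul_extendedFlux (H : StefanFlow ε p S W v) {Φ Φ' : ℝ → ℝ} {t R : ℝ} (hR : S t ≤ R)
    (hΦ : ∀ x, HasDerivAt Φ (Φ' x) x) (hΦ' : Continuous Φ') :
    ∫ x in (0 : ℝ)..R, Φ x * extendedFlux S v t x
      = W t 0 * Φ 0 + ∫ x in (0 : ℝ)..R, W t x * Φ' x := by
  have key := integral_mul_deriv_eq_deriv_mul_off_countable ((H.front_pos t).le.trans hR)
    (countable_singleton (S t)) (continuous_iff_continuousAt.2 fun x => (hΦ x).continuousAt)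
    (H.continuous_temp_space t) (fun x _ => hΦ x)
    (fun x hx => H.hasDerivAt_temp_space hx.1.1 hx.2) (hΦ'.intervalIntegrable _ _)
    (H.intervalIntegrable_extendedFlux t 0 R).neg
  simp only [mul_neg, intervalIntegral.integral_neg, H.temp_eq_zero t R hR,
    mul_comm (Φ' _)] at key
  linarith

lemma hasDerivAt_integral_front (H : StefanFlow ε p S W v) {t : ℝ} (ht : ε < t) {g : ℝ → ℝ}
    (hg : Continuous g) :
    HasDerivAt (fun b => ∫ x in (S t)..(S b), g x) (v t (S t) * g (S t)) t :=
  hasDerivAt_integral_moving_right (F := fun _ => g) (hg.comp continuous_snd) H.continuous_front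
    (H.hasDerivAt_front t ht)

lemma hasDerivAt_integral_enthalpyTail_sub_mul (H : StefanFlow ε p S W v) {G : ℝ → ℝ → ℝ}
    {t R B : ℝ} (ht : ε < t) (hR : 0 ≤ R) (hG : ∀ b, IntervalIntegrable (G b) volume 0 R)
    (hGB : ∀ᶠ b in 𝓝 t, ∀ x ∈ Ioc 0 R, |G b x| ≤ B)
    (hGt : ∀ x ≠ S t, ContinuousAt (fun b => G b x) t) :
    HasDerivAt (fun b => ∫ x in (0 : ℝ)..R, (enthalpyTail S W b x - enthalpyTail S W t x) * G b x)
      (∫ x in (0 : ℝ)..R, extendedFlux S v t x * G t x) t := by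
  obtain ⟨C, hC, hv⟩ := exists_abs_le_of_continuous_uncurry H.continuous_flux ε (t + 1) 0 R
  have htm : t ∈ Ioc ε (t + 1) := ⟨ht, by linarith⟩
  refine hasDerivAt_integral_of_abs_sub_le (C := C * B) hR (Eventually.of_forall fun b => ?_) ?_ ?_
    (countable_singleton (S t)) fun x hx hxS => ?_
  · exact (hG b).continuousOn_mul ((H.continuous_enthalpyTail_space b).sub
      (H.continuous_enthalpyTail_space t)).continuousOn
  · have hV := H.intervalIntegrable_extendedFlux t 0 R
    have hGt := hG t
    rw [intervalIntegrable_iff_integrableOn_Ioc_of_le hR] at hV hGt ⊢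
    refine hGt.bdd_mul (c := C) hV.aestronglyMeasurable ?_
    exact (ae_restrict_iff' measurableSet_Ioc).2 (ae_of_all _ fun x hx =>
      abs_extendedFlux_le (hv t (Ioc_subset_Icc_self htm) x (Ioc_subset_Icc_self hx)))
  · filter_upwards [hGB, Ioc_mem_nhds ht (lt_add_one t)] with b hbG hb x hx
    rw [sub_self, zero_mul, sub_zero, abs_mul]
    calc |enthalpyTail S W b x - enthalpyTail S W t x| * |G b x| ≤ (C * |b - t|) * B := by
          gcongr
          · exact H.abs_enthalpyTail_sub_le hv htm hb (Ioc_subset_Icc_self hx)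
          · exact hbG x hx
      _ = C * B * |b - t| := by ring
  · exact hasDerivAt_mul_of_eq_zero ((H.hasDerivAt_enthalpyTail_time ht hx.1.le hxS).sub_const _)
      (sub_self _) (hGt x hxS)

lemma integral_temp_mul_testFunction (H : StefanFlow ε p S W v) {ψ ψt ψx ψxx : ℝ → ℝ → ℝ}
    (hψ : IsTestFunction ψ ψt ψx ψxx) {t b R : ℝ} (ht : S t ≤ R) (hb : S b ≤ R) :
    ∫ x in (0 : ℝ)..R, W b x * ψ b x = (∫ x in (0 : ℝ)..R, W t x * ψ t x)
      + ((enthalpyTail S W b 0 - enthalpyTail S W t 0) * ψ t 0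
        + (∫ x in (0 : ℝ)..R, (enthalpyTail S W b x - enthalpyTail S W t x) * ψx t x)
        - (∫ x in (S t)..(S b), ψ t x) + ∫ x in (0 : ℝ)..R, W b x * (ψ b x - ψ t x)) := by
  have hc := continuous_space_slice hψ.continuous_self
  have hW := H.continuous_temp_space
  have key := H.integral_mul_temp_sub countable_empty ht hb (hc t)
    (fun x _ => hψ.hasDerivAt_space t x)
    ((continuous_space_slice hψ.continuous_space t).intervalIntegrable _ _)
  simp only [mul_comm (enthalpyTail S W b _ - enthalpyTail S W t _)]
  rw [← key, ← intervalIntegral.integral_add, ← intervalIntegral.integral_add]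
  · congr 1 with x
    ring
  · exact ((hW t).mul (hc t)).intervalIntegrable _ _
  · exact (((hc t).mul ((hW b).sub (hW t))).add
      ((hW b).mul ((hc b).sub (hc t)))).intervalIntegrable _ _
  · exact ((hc t).mul ((hW b).sub (hW t))).intervalIntegrable _ _
  · exact ((hW b).mul ((hc b).sub (hc t))).intervalIntegrable _ _

lemma eventually_front_le (H : StefanFlow ε p S W v) {t R : ℝ} (hR : S (t + 1) ≤ R) :
    ∀ᶠ b in 𝓝 t, S b ≤ R := by
  filter_upwards [gt_mem_nhds (lt_add_one t)] with b hb
  exact (H.monotone_front (le_of_lt hb)).trans hR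

lemma hasDerivAt_integral_temp_mul_testFunction (H : StefanFlow ε p S W v)
    {ψ ψt ψx ψxx : ℝ → ℝ → ℝ} (hψ : IsTestFunction ψ ψt ψx ψxx) {t R : ℝ} (ht : ε < t)
    (hR : S (t + 1) ≤ R) :
    HasDerivAt (fun b => ∫ x in (0 : ℝ)..R, W b x * ψ b x)
      ((∫ x in (0 : ℝ)..R, W t x * (ψt t x + ψxx t x)) + W t 0 ^ p * ψ t 0 + W t 0 * ψx t 0
        - v t (S t) * ψ t (S t)) t := by
  have hR0 : 0 ≤ R := (H.front_pos _).le.trans hR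
  have hSt : S t ≤ R := (H.eventually_front_le hR).self_of_nhds
  have hx := continuous_space_slice hψ.continuous_space t
  obtain ⟨B, hB⟩ := isCompact_Icc.exists_bound_of_continuousOn (hx.continuousOn (s := Icc 0 R))
  have d_boundary := (((H.hasDerivAt_enthalpyTail_time ht le_rfl (H.front_pos t).ne).sub_const
    (enthalpyTail S W t 0)).mul_const (ψ t 0))
  have d_interior := H.hasDerivAt_integral_enthalpyTail_sub_mul (G := fun _ => ψx t) ht hR0
    (fun _ => hx.intervalIntegrable _ _)
    (Eventually.of_forall fun _ x hx => hB x (Ioc_subset_Icc_self hx))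
    (fun _ _ => continuousAt_const)
  have d_front := H.hasDerivAt_integral_front ht (continuous_space_slice hψ.continuous_self t)
  have d_test := hasDerivAt_integral_mul_sub H.continuous_temp hψ.continuous_self
    hψ.continuous_time hψ.hasDerivAt_time hR0 t
  have d_total := (((d_boundary.add d_interior).sub d_front).add d_test).const_add
    (∫ x in (0 : ℝ)..R, W t x * ψ t x)
  refine (d_total.congr_of_eventuallyEq ?_).congr_deriv ?_
  · filter_upwards [H.eventually_front_le hR] with b hb
    exact H.integral_temp_mul_testFunction hψ hSt hb
  · have hW := H.continuous_temp_space t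
    have iψt : IntervalIntegrable (fun x => W t x * ψt t x) volume 0 R :=
      (hW.mul (continuous_space_slice hψ.continuous_time t)).intervalIntegrable _ _
    have iψxx : IntervalIntegrable (fun x => W t x * ψxx t x) volume 0 R :=
      (hW.mul (continuous_space_slice hψ.continuous_space_two t)).intervalIntegrable _ _
    simp only [mul_comm (extendedFlux S v t _), mul_add]
    rw [H.integral_mul_extendedFlux hSt (hψ.hasDerivAt_space_two t)
      (continuous_space_slice hψ.continuous_space_two t), H.extendedFlux_zero,
      intervalIntegral.integral_add iψt iψxx]
    ring

lemma integral_temp_sq_sub (H : StefanFlow ε p S W v) {a b R : ℝ} (ha : S a ≤ R) (hb : S b ≤ R) :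
    (∫ x in (0 : ℝ)..R, W b x ^ 2) - ∫ x in (0 : ℝ)..R, W a x ^ 2 =
      (enthalpyTail S W b 0 - enthalpyTail S W a 0) * (W a 0 + W b 0)
        - (∫ x in (0 : ℝ)..R, (enthalpyTail S W b x - enthalpyTail S W a x)
            * (extendedFlux S v a x + extendedFlux S v b x))
        - ((∫ x in (S a)..(S b), W a x) + ∫ x in (S a)..(S b), W b x) := by
  have hW := H.continuous_temp_space
  have key := H.integral_mul_temp_sub (toFinite {S a, S b}).countable ha hb ((hW a).add (hW b))
    (Ψ := fun x => W a x + W b x) (ψ := fun x => -extendedFlux S v a x + -extendedFlux S v b x)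
    (fun x hx => (H.hasDerivAt_temp_space hx.1.1 fun h => hx.2 (by simp [h])).add
      (H.hasDerivAt_temp_space hx.1.1 fun h => hx.2 (by simp [h])))
    ((H.intervalIntegrable_extendedFlux a 0 R).neg.add
      (H.intervalIntegrable_extendedFlux b 0 R).neg)
  have iW : ∀ t, IntervalIntegrable (fun x => W t x ^ 2) volume 0 R := fun t =>
    ((hW t).pow 2).intervalIntegrable _ _
  have hsq : ∀ x, (W a x + W b x) * (W b x - W a x) = W b x ^ 2 - W a x ^ 2 := fun x => by ring
  simp only [hsq, ← neg_add, neg_mul, intervalIntegral.integral_neg] at key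
  rw [intervalIntegral.integral_sub (iW b) (iW a), intervalIntegral.integral_add
    ((hW a).intervalIntegrable _ _) ((hW b).intervalIntegrable _ _)] at key
  simp only [key, mul_comm (enthalpyTail S W b _ - enthalpyTail S W a _)]
  ring

lemma hasDerivAt_integral_temp_sq (H : StefanFlow ε p S W v) {t R : ℝ} (ht : ε < t)
    (hR : S (t + 1) ≤ R) :
    HasDerivAt (fun b => ∫ x in (0 : ℝ)..R, W b x ^ 2)
      (2 * (W t 0 ^ p * W t 0) - 2 * ∫ x in (0 : ℝ)..R, extendedFlux S v t x ^ 2) t := by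
  have hR0 : 0 ≤ R := (H.front_pos _).le.trans hR
  have hSt : S t ≤ R := (H.eventually_front_le hR).self_of_nhds
  obtain ⟨C, -, hv⟩ := exists_abs_le_of_continuous_uncurry H.continuous_flux ε (t + 1) 0 R
  have hV : ∀ b ∈ Ioc ε (t + 1), ∀ x ∈ Ioc 0 R, |extendedFlux S v b x| ≤ C := fun b hb x hx =>
    abs_extendedFlux_le (hv b (Ioc_subset_Icc_self hb) x (Ioc_subset_Icc_self hx))
  have d_boundary := hasDerivAt_mul_of_eq_zero ((H.hasDerivAt_enthalpyTail_time ht le_rfl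
    (H.front_pos t).ne).sub_const (enthalpyTail S W t 0)) (sub_self _)
    (g := fun b => W t 0 + W b 0) (continuousAt_const.add (H.continuous_temp_time 0).continuousAt)
  have d_interior := H.hasDerivAt_integral_enthalpyTail_sub_mul (B := C + C)
    (G := fun b x => extendedFlux S v t x + extendedFlux S v b x) ht hR0
    (fun b => (H.intervalIntegrable_extendedFlux t 0 R).add
      (H.intervalIntegrable_extendedFlux b 0 R))
    (by
      filter_upwards [Ioc_mem_nhds ht (lt_add_one t)] with b hb x hx
      exact (abs_add_le _ _).trans (add_le_add (hV t ⟨ht, by linarith⟩ x hx) (hV b hb x hx)))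
    (fun x hx => continuousAt_const.add (H.continuousAt_extendedFlux_time hx))
  have d_front := (H.hasDerivAt_integral_front ht (H.continuous_temp_space t)).add
    (H.hasDerivAt_integral_past_front ht)
  have d_total := ((d_boundary.sub d_interior).sub d_front).const_add (∫ x in (0 : ℝ)..R, W t x ^ 2)
  refine (d_total.congr_of_eventuallyEq ?_).congr_deriv ?_
  · filter_upwards [H.eventually_front_le hR] with b hb
    exact sub_eq_iff_eq_add'.1 (H.integral_temp_sq_sub hSt hb)
  · simp only [← two_mul, mul_left_comm _ (2 : ℝ), intervalIntegral.integral_const_mul, ← sq,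
      H.extendedFlux_zero, H.temp_eq_zero t _ le_rfl]
    ring

lemma integral_temp_sub_sq (H : StefanFlow ε p S W v) {a b R : ℝ} (hab : a ≤ b) (hb : S b ≤ R) :
    ∫ x in (0 : ℝ)..R, (W b x - W a x) ^ 2 =
      (W b 0 - W a 0) * (enthalpyTail S W b 0 - enthalpyTail S W a 0)
        - (∫ x in (0 : ℝ)..R, (enthalpyTail S W b x - enthalpyTail S W a x)
            * (extendedFlux S v b x - extendedFlux S v a x))
        - ∫ x in (S a)..(S b), W b x := by
  have hW := H.continuous_temp_space
  have hSab := H.monotone_front hab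
  have key := H.integral_mul_temp_sub (toFinite {S a, S b}).countable (hSab.trans hb) hb
    ((hW b).sub (hW a)) (Ψ := fun x => W b x - W a x)
    (ψ := fun x => -extendedFlux S v b x - -extendedFlux S v a x)
    (fun x hx => (H.hasDerivAt_temp_space hx.1.1 fun h => hx.2 (by simp [h])).sub
      (H.hasDerivAt_temp_space hx.1.1 fun h => hx.2 (by simp [h])))
    ((H.intervalIntegrable_extendedFlux b 0 R).neg.sub
      (H.intervalIntegrable_extendedFlux a 0 R).neg)
  rw [intervalIntegral.integral_sub ((hW b).intervalIntegrable _ _)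
    ((hW a).intervalIntegrable _ _), H.integral_temp_eq_zero le_rfl hSab, sub_zero] at key
  simp only [← sq, neg_sub_neg, ← neg_sub (extendedFlux S v b _), neg_mul,
    intervalIntegral.integral_neg] at key
  simp only [key, mul_comm (enthalpyTail S W b _ - enthalpyTail S W a _)]
  ring

lemma abs_enthalpyTail_increment_sq_sub_le (H : StefanFlow ε p S W v) {T R C h : ℝ} (hC : 0 ≤ C)
    (hh : 0 ≤ h) (hv : ∀ t ∈ Icc ε T, ∀ x ∈ Icc 0 R, |v t x| ≤ C) {a b x : ℝ}
    (ha : ε < a) (haT : a + h ≤ T) (hb : ε < b) (hbT : b + h ≤ T) (hx : x ∈ Icc 0 R) :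
    |(enthalpyTail S W (b + h) x - enthalpyTail S W b x) ^ 2
        - (enthalpyTail S W (a + h) x - enthalpyTail S W a x) ^ 2|
      ≤ (C * h + C * h) * (C + C) * |b - a| := by
  have lip : ∀ {c d}, c ∈ Ioc ε T → d ∈ Ioc ε T →
      |enthalpyTail S W d x - enthalpyTail S W c x| ≤ C * |d - c| :=
    fun hc hd => H.abs_enthalpyTail_sub_le hv hc hd hx
  have ma : a ∈ Ioc ε T := ⟨ha, by linarith⟩
  have mb : b ∈ Ioc ε T := ⟨hb, by linarith⟩
  have mah : a + h ∈ Ioc ε T := ⟨by linarith, haT⟩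
  have mbh : b + h ∈ Ioc ε T := ⟨by linarith, hbT⟩
  have l₁ := lip ma mah
  have l₂ := lip mb mbh
  have l₃ := lip mah mbh
  have l₄ := lip ma mb
  rw [add_sub_add_right_eq_sub] at l₃
  rw [add_sub_cancel_left, abs_of_nonneg hh] at l₁ l₂
  calc _ = |((enthalpyTail S W (b + h) x - enthalpyTail S W b x)
            + (enthalpyTail S W (a + h) x - enthalpyTail S W a x)) *
          ((enthalpyTail S W (b + h) x - enthalpyTail S W (a + h) x)
            - (enthalpyTail S W b x - enthalpyTail S W a x))| := by
        congr 1
        ring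
    _ ≤ (C * h + C * h) * (C * |b - a| + C * |b - a|) := by
        rw [abs_mul]
        gcongr
        · exact (abs_add_le _ _).trans (add_le_add l₂ l₁)
        · exact (abs_sub _ _).trans (add_le_add l₃ l₄)
    _ = _ := by ring

lemma hasDerivAt_integral_enthalpyTail_increment_sq (H : StefanFlow ε p S W v) {t h R : ℝ}
    (ht : ε < t) (hh : 0 ≤ h) (hR : 0 ≤ R) :
    HasDerivAt
      (fun b => ∫ x in (0 : ℝ)..R, (enthalpyTail S W (b + h) x - enthalpyTail S W b x) ^ 2)
      (∫ x in (0 : ℝ)..R, 2 * (enthalpyTail S W (t + h) x - enthalpyTail S W t x)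
        * (extendedFlux S v (t + h) x - extendedFlux S v t x)) t := by
  obtain ⟨C, hC, hv⟩ := exists_abs_le_of_continuous_uncurry H.continuous_flux ε (t + 1 + h) 0 R
  have hZ : ∀ b, Continuous fun x => enthalpyTail S W (b + h) x - enthalpyTail S W b x := fun b =>
    (H.continuous_enthalpyTail_space _).sub (H.continuous_enthalpyTail_space b)
  refine hasDerivAt_integral_of_abs_sub_le (C := (C * h + C * h) * (C + C)) hR
    (Eventually.of_forall fun b => ?_) ?_ ?_ (toFinite {S t, S (t + h)}).countable
    (fun x hx hxS => ?_)
  · exact ((hZ b).pow 2).intervalIntegrable _ _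
  · exact ((H.intervalIntegrable_extendedFlux _ 0 R).sub
      (H.intervalIntegrable_extendedFlux _ 0 R)).continuousOn_mul
      (continuous_const.mul (hZ t)).continuousOn
  · filter_upwards [Ioc_mem_nhds ht (lt_add_one t)] with b hb x hx
    exact H.abs_enthalpyTail_increment_sq_sub_le hC.le hh hv ht (by linarith) hb.1
      (by linarith [hb.2]) (Ioc_subset_Icc_self hx)
  · simp only [mem_insert_iff, mem_singleton_iff, not_or] at hxS
    have d₁ := H.hasDerivAt_enthalpyTail_time ht hx.1.le hxS.1
    have d₂ := (H.hasDerivAt_enthalpyTail_time (by linarith : ε < t + h) hx.1.le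
      hxS.2).comp_add_const t h
    exact ((d₂.sub d₁).pow 2).congr_deriv (by simp)

/-- Testing the time increment of the heat equation against the increment of `Z`. -/
lemma hasDerivAt_integral_enthalpyTail_increment_sq_eq (H : StefanFlow ε p S W v) {t h R : ℝ}
    (ht : ε < t) (hh : 0 ≤ h) (hR : S (t + h) ≤ R) :
    HasDerivAt
      (fun b => ∫ x in (0 : ℝ)..R, (enthalpyTail S W (b + h) x - enthalpyTail S W b x) ^ 2)
      (2 * ((W (t + h) 0 - W t 0) * (enthalpyTail S W (t + h) 0 - enthalpyTail S W t 0)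
        - (∫ x in (0 : ℝ)..R, (W (t + h) x - W t x) ^ 2)
        - ∫ x in (S t)..(S (t + h)), W (t + h) x)) t := by
  refine (H.hasDerivAt_integral_enthalpyTail_increment_sq ht hh
    ((H.front_pos _).le.trans hR)).congr_deriv ?_
  simp only [mul_assoc, intervalIntegral.integral_const_mul]
  rw [H.integral_temp_sub_sq (by linarith : t ≤ t + h) hR]
  ring

end StefanFlow

/-! ### The energy identity -/

/-- The Dirichlet integral `∫₀^{S(t)} |∂ₓW|²`, written in terms of the flux `v = -∂ₓW`. -/
def dirichletIntegral (S : ℝ → ℝ) (v : ℝ → ℝ → ℝ) (t : ℝ) : ℝ := ∫ x in (0 : ℝ)..S t, v t x ^ 2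

/-- The heat contained at time `t + h` in the layer melted between the times `t` and `t + h`. -/
def layerMass (S : ℝ → ℝ) (W : ℝ → ℝ → ℝ) (h t : ℝ) : ℝ := ∫ x in (S t)..(S (t + h)), W (t + h) x

/-- The difference-quotient approximation, with time step `h`, of
`∫_{t₁}^{t₂} ∫₀^R |∂ₜW|² dx dt`. -/
def timeQuotientEnergy (W : ℝ → ℝ → ℝ) (R t₁ t₂ h : ℝ) : ℝ :=
  ∫ t in t₁..t₂, (∫ x in (0 : ℝ)..R, (W (t + h) x - W t x) ^ 2) / h ^ 2

namespace StefanFlow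

variable {ε p : ℝ} {S : ℝ → ℝ} {W v : ℝ → ℝ → ℝ}

lemma energy_eq (H : StefanFlow ε p S W v) (t : ℝ) :
    energy p S W t = 1 / 2 * dirichletIntegral S v t - W t 0 ^ (p + 1) / (p + 1) := by
  have hderiv : ∫ x in (0 : ℝ)..S t, deriv (W t) x ^ 2 = dirichletIntegral S v t := by
    refine intervalIntegral.integral_congr_ae ?_
    have hne : ∀ᵐ x ∂(volume : Measure ℝ), x ≠ S t := by simp [ae_iff]
    filter_upwards [hne] with x hxS hx
    rw [uIoc_of_le (H.front_pos t).le] at hx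
    rw [(H.hasDerivAt_temp t x ⟨hx.1, hx.2.lt_of_ne hxS⟩).deriv, neg_sq]
  rw [energy, hderiv]

lemma integral_extendedFlux_sq (H : StefanFlow ε p S W v) {t R : ℝ} (hR : S t ≤ R) :
    ∫ x in (0 : ℝ)..R, extendedFlux S v t x ^ 2 = dirichletIntegral S v t := by
  rw [dirichletIntegral, ← intervalIntegral.integral_indicator ⟨(H.front_pos t).le, hR⟩]
  congr 1 with x
  by_cases h : x ≤ S t <;> simp [extendedFlux, indicator, h]

lemma tendsto_integral_enthalpyTail_quotient_sq (H : StefanFlow ε p S W v) {t R : ℝ} (ht : ε < t)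
    (hR : S t ≤ R) :
    Tendsto (fun h => (∫ x in (0 : ℝ)..R,
        (enthalpyTail S W (t + h) x - enthalpyTail S W t x) ^ 2) / h ^ 2)
      (𝓝[>] 0) (𝓝 (dirichletIntegral S v t)) := by
  have hR0 : 0 ≤ R := (H.front_pos t).le.trans hR
  obtain ⟨C, -, hv⟩ := exists_abs_le_of_continuous_uncurry H.continuous_flux ε (t + 1) 0 R
  simp only [← H.integral_extendedFlux_sq hR, ← intervalIntegral.integral_div]
  refine intervalIntegral.tendsto_integral_filter_of_dominated_convergence (fun _ => C ^ 2)
    (Eventually.of_forall fun h => ?_) ?_ intervalIntegrable_const ?_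
  · exact ((((H.continuous_enthalpyTail_space _).sub
      (H.continuous_enthalpyTail_space t)).pow 2).div_const _).aestronglyMeasurable
  · filter_upwards [Ioo_mem_nhdsGT one_pos] with h hh
    refine ae_of_all _ fun x hx => ?_
    have hlip := H.abs_enthalpyTail_sub_le hv (a := t) (b := t + h) ⟨ht, by linarith⟩
      ⟨by linarith [hh.1], by linarith [hh.2]⟩ (Ioc_subset_Icc_self (uIoc_of_le hR0 ▸ hx))
    rw [add_sub_cancel_left, abs_of_pos hh.1] at hlip
    rw [← div_pow, norm_pow, norm_div, Real.norm_eq_abs, Real.norm_eq_abs, abs_of_pos hh.1]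
    exact pow_le_pow_left₀ (div_nonneg (abs_nonneg _) hh.1.le) ((div_le_iff₀ hh.1).2 hlip) 2
  · have hne : ∀ᵐ x ∂(volume : Measure ℝ), x ≠ S t := by simp [ae_iff]
    filter_upwards [hne] with x hxS hx
    rw [uIoc_of_le hR0] at hx
    refine ((H.hasDerivAt_enthalpyTail_time ht hx.1.le hxS).tendsto_slope_zero_right.pow 2).congr
      fun h => ?_
    rw [smul_eq_mul, inv_mul_eq_div, div_pow]

lemma abs_temp_sub_le (H : StefanFlow ε p S W v) {t x y C : ℝ}
    (hv : ∀ z ∈ Icc x y, |v t z| ≤ C) (hx : 0 ≤ x) (hxy : x ≤ y) (hy : y ≤ S t) :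
    |W t x - W t y| ≤ C * (y - x) := by
  have hftc := intervalIntegral.integral_eq_sub_of_hasDerivAt_of_le hxy
    (H.continuous_temp_space t).continuousOn
    (fun z hz => H.hasDerivAt_temp t z ⟨hx.trans_lt hz.1, hz.2.trans_le hy⟩)
    ((H.continuous_flux_space t).neg.intervalIntegrable _ _)
  rw [abs_sub_comm, ← hftc, ← Real.norm_eq_abs, ← abs_of_nonneg (sub_nonneg.2 hxy)]
  refine intervalIntegral.norm_integral_le_of_norm_le_const fun z hz => ?_
  rw [norm_neg]
  exact hv z (Ioc_subset_Icc_self (uIoc_of_le hxy ▸ hz))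

/-- Heat balance on `[0, δ]`, where the temperature is within `C δ` of its boundary value. -/
lemma mul_abs_temp_boundary_sub_le (H : StefanFlow ε p S W v) {a b δ C : ℝ} (ha : ε < a)
    (hab : a ≤ b) (hδ : 0 ≤ δ) (hδS : δ ≤ S a)
    (hv : ∀ t ∈ Icc a b, ∀ x ∈ Icc 0 δ, |v t x| ≤ C) :
    δ * |W b 0 - W a 0| ≤ 2 * C * (b - a) + 2 * C * δ * δ := by
  have hflux : |∫ τ in a..b, (v τ 0 - v τ δ)| ≤ 2 * C * (b - a) := by
    rw [← Real.norm_eq_abs, ← abs_of_nonneg (sub_nonneg.2 hab)]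
    refine intervalIntegral.norm_integral_le_of_norm_le_const fun τ hτ => ?_
    have hτ' := Ioc_subset_Icc_self (uIoc_of_le hab ▸ hτ)
    refine (abs_sub _ _).trans ?_
    linarith [hv τ hτ' 0 ⟨le_rfl, hδ⟩, hv τ hτ' δ ⟨hδ, le_rfl⟩]
  have hosc : |∫ y in (0 : ℝ)..δ, ((W b y - W a y) - (W b 0 - W a 0))| ≤ 2 * C * δ * δ := by
    have key : ∀ y ∈ Icc 0 δ, ‖(W b y - W a y) - (W b 0 - W a 0)‖ ≤ 2 * C * δ := fun y hy => by
      have hC : 0 ≤ C := (abs_nonneg _).trans (hv a ⟨le_rfl, hab⟩ 0 ⟨le_rfl, hδ⟩)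
      have lip : ∀ t ∈ Icc a b, |W t 0 - W t y| ≤ C * δ := fun t ht =>
        (H.abs_temp_sub_le (fun z hz => hv t ht z ⟨hz.1, hz.2.trans hy.2⟩) le_rfl hy.1
          (hy.2.trans (hδS.trans (H.monotone_front ht.1)))).trans (by gcongr; linarith [hy.2])
      have htri := abs_sub (W a 0 - W a y) (W b 0 - W b y)
      rw [Real.norm_eq_abs, (by ring : W b y - W a y - (W b 0 - W a 0) =
        (W a 0 - W a y) - (W b 0 - W b y))]
      linarith [lip a ⟨le_rfl, hab⟩, lip b ⟨hab, le_rfl⟩]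
    simpa [abs_of_nonneg hδ] using intervalIntegral.norm_integral_le_of_norm_le_const
      fun y hy => key y (Ioc_subset_Icc_self (uIoc_of_le hδ ▸ hy))
  have iW : IntervalIntegrable (fun y => W b y - W a y) volume 0 δ :=
    ((H.continuous_temp_space b).sub (H.continuous_temp_space a)).intervalIntegrable _ _
  rw [intervalIntegral.integral_sub iW intervalIntegrable_const, H.balance a b ha hab δ ⟨hδ, hδS⟩,
    intervalIntegral.integral_const, smul_eq_mul, sub_zero] at hosc
  rw [← abs_of_nonneg hδ, ← abs_mul, abs_of_nonneg hδ]
  rw [abs_le] at hflux hosc ⊢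
  constructor <;> linarith

lemma exists_abs_temp_boundary_sub_le_sqrt (H : StefanFlow ε p S W v) {t₁ : ℝ} (t₂ : ℝ)
    (h₁ : ε < t₁) :
    ∃ C, 0 < C ∧ ∀ t ∈ Icc t₁ t₂, ∀ h ∈ Ioo (0 : ℝ) 1, |W (t + h) 0 - W t 0| ≤ C * √h := by
  obtain ⟨C, hC, hv⟩ := exists_abs_le_of_continuous_uncurry H.continuous_flux t₁ (t₂ + 1) 0 (S t₁)
  have hS := H.front_pos t₁
  refine ⟨2 * C * (1 / S t₁ + S t₁), by positivity, fun t ht h hh => ?_⟩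
  have hsqrt : 0 < √h := Real.sqrt_pos.2 hh.1
  have hδS : S t₁ * √h ≤ S t₁ := mul_le_of_le_one_right hS.le (Real.sqrt_le_one.2 hh.2.le)
  have key := H.mul_abs_temp_boundary_sub_le (δ := S t₁ * √h) (h₁.trans_le ht.1)
    (by linarith [hh.1] : t ≤ t + h) (by positivity) (hδS.trans (H.monotone_front ht.1))
    fun τ hτ x hx => hv τ ⟨ht.1.trans hτ.1, by linarith [hτ.2, ht.2, hh.2]⟩ x
      ⟨hx.1, hx.2.trans hδS⟩
  refine le_of_mul_le_mul_left (key.trans_eq ?_) (by positivity : 0 < S t₁ * √h)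
  rw [add_sub_cancel_left]
  nth_rewrite 1 [← Real.mul_self_sqrt hh.1.le]
  field_simp

lemma front_sub_le (H : StefanFlow ε p S W v) {a b C : ℝ} (ha : ε < a) (hab : a ≤ b)
    (hv : ∀ t ∈ Icc a b, |v t (S t)| ≤ C) : S b - S a ≤ C * (b - a) := by
  have key := (convex_Icc a b).norm_image_sub_le_of_norm_hasDerivWithin_le
    (fun t ht => (H.hasDerivAt_front t (ha.trans_le ht.1)).hasDerivWithinAt) hv
    (left_mem_Icc.2 hab) (right_mem_Icc.2 hab)
  rw [Real.norm_eq_abs, Real.norm_eq_abs, abs_of_nonneg (sub_nonneg.2 hab)] at key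
  exact (le_abs_self _).trans key

lemma layerMass_eq (H : StefanFlow ε p S W v) {h t : ℝ} (hh : 0 ≤ h) :
    layerMass S W h t = (S (t + h) - S t) ^ 2 *
      ∫ θ in (0 : ℝ)..1, θ * v (t + h) (S t + (S (t + h) - S t) * θ) := by
  have hS : S t ≤ S (t + h) := H.monotone_front (by linarith)
  have hpos := H.front_pos t
  have hparts := integral_mul_deriv_eq_deriv_mul_off_countable hS countable_empty
    (f := fun x => x - S t) (f' := fun _ => 1) (by fun_prop) (H.continuous_temp_space (t + h))
    (fun x _ => (hasDerivAt_id x).sub_const _)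
    (fun x hx => H.hasDerivAt_temp (t + h) x ⟨hpos.trans hx.1.1, hx.1.2⟩)
    intervalIntegrable_const ((H.continuous_flux_space _).neg.intervalIntegrable _ _)
  have hscale := intervalIntegral.smul_integral_comp_add_mul (a := 0) (b := 1)
    (fun x => (x - S t) * v (t + h) x) (S (t + h) - S t) (S t)
  simp only [one_mul, H.temp_eq_zero _ _ le_rfl, mul_zero, sub_self, zero_mul, mul_neg,
    intervalIntegral.integral_neg, zero_sub, neg_inj] at hparts
  simp only [smul_eq_mul, mul_zero, add_zero, mul_one, add_sub_cancel, add_sub_cancel_left,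
    mul_assoc, intervalIntegral.integral_const_mul] at hscale
  rw [layerMass, ← hparts, ← hscale]
  ring

lemma tendsto_layerMass_div_sq (H : StefanFlow ε p S W v) {t : ℝ} (ht : ε < t) :
    Tendsto (fun h => layerMass S W h t / h ^ 2) (𝓝[>] 0) (𝓝 (v t (S t) ^ 3 / 2)) := by
  have hpath : Continuous fun q : ℝ × ℝ =>
      q.2 * v (t + q.1) (S t + (S (t + q.1) - S t) * q.2) := by
    have hS := H.continuous_front
    exact continuous_snd.mul (H.continuous_flux.comp (by fun_prop :
      Continuous fun q : ℝ × ℝ => (t + q.1, S t + (S (t + q.1) - S t) * q.2)))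
  have hmean : Continuous fun h => ∫ θ in (0 : ℝ)..1,
      θ * v (t + h) (S t + (S (t + h) - S t) * θ) :=
    intervalIntegral.continuous_parametric_intervalIntegral_of_continuous' hpath _ _
  have hlim := ((H.hasDerivAt_front t ht).tendsto_slope_zero_right.pow 2).mul
    (hmean.tendsto' 0 (v t (S t) / 2) (by simp; ring) |>.mono_left nhdsWithin_le_nhds)
  rw [(by ring : v t (S t) ^ 2 * (v t (S t) / 2) = v t (S t) ^ 3 / 2)] at hlim
  refine hlim.congr' ?_
  filter_upwards [self_mem_nhdsWithin] with h hh
  rw [H.layerMass_eq (le_of_lt hh), smul_eq_mul]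
  ring

lemma continuous_layerMass (H : StefanFlow ε p S W v) (h : ℝ) : Continuous (layerMass S W h) := by
  have hS := H.continuous_front
  have hW : Continuous (Function.uncurry fun t x => W (t + h) x) :=
    H.continuous_temp.comp (by fun_prop : Continuous fun q : ℝ × ℝ => (q.1 + h, q.2))
  have hdiff := (intervalIntegral.continuous_parametric_intervalIntegral_of_continuous
    (a₀ := 0) (μ := volume) hW (by fun_prop : Continuous fun t => S (t + h))).sub
    (intervalIntegral.continuous_parametric_intervalIntegral_of_continuous
      (a₀ := 0) (μ := volume) hW hS)
  refine hdiff.congr fun t => ?_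
  exact intervalIntegral.integral_interval_sub_left
    ((H.continuous_temp_space _).intervalIntegrable _ _)
    ((H.continuous_temp_space _).intervalIntegrable _ _)

lemma abs_layerMass_le (H : StefanFlow ε p S W v) {t h C : ℝ} (ht : ε < t) (hh : 0 ≤ h)
    (hv : ∀ τ ∈ Icc t (t + h), ∀ x ∈ Icc 0 (S (t + h)), |v τ x| ≤ C) :
    |layerMass S W h t| ≤ C ^ 3 * h ^ 2 := by
  have hS : 0 ≤ S (t + h) - S t := sub_nonneg.2 (H.monotone_front (by linarith))
  have hpos := H.front_pos t
  have hfront : S (t + h) - S t ≤ C * h := by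
    refine (H.front_sub_le ht (by linarith) fun τ hτ => hv τ hτ (S τ) ?_).trans_eq (by ring)
    exact ⟨(H.front_pos τ).le, H.monotone_front hτ.2⟩
  have hmean : |∫ θ in (0 : ℝ)..1, θ * v (t + h) (S t + (S (t + h) - S t) * θ)| ≤ C := by
    have key : ∀ θ ∈ uIoc (0 : ℝ) 1, ‖θ * v (t + h) (S t + (S (t + h) - S t) * θ)‖ ≤ C := by
      intro θ hθ
      rw [uIoc_of_le zero_le_one] at hθ
      have hflux := hv (t + h) ⟨by linarith, le_rfl⟩ (S t + (S (t + h) - S t) * θ)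
        ⟨by nlinarith [hθ.1], by nlinarith [hθ.2]⟩
      rw [norm_mul, Real.norm_of_nonneg hθ.1.le]
      exact (mul_le_of_le_one_left (norm_nonneg _) hθ.2).trans hflux
    simpa using intervalIntegral.norm_integral_le_of_norm_le_const key
  rw [H.layerMass_eq hh, abs_mul, abs_of_nonneg (sq_nonneg _)]
  calc _ ≤ (C * h) ^ 2 * C := by gcongr
    _ = C ^ 3 * h ^ 2 := by ring

lemma tendsto_integral_layerMass_div_sq (H : StefanFlow ε p S W v) {t₁ t₂ : ℝ} (h₁ : ε < t₁)
    (h₁₂ : t₁ ≤ t₂) :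
    Tendsto (fun h => ∫ t in t₁..t₂, layerMass S W h t / h ^ 2) (𝓝[>] 0)
      (𝓝 (∫ t in t₁..t₂, v t (S t) ^ 3 / 2)) := by
  obtain ⟨C, -, hv⟩ :=
    exists_abs_le_of_continuous_uncurry H.continuous_flux ε (t₂ + 1) 0 (S (t₂ + 1))
  refine intervalIntegral.tendsto_integral_filter_of_dominated_convergence (fun _ => C ^ 3)
    (Eventually.of_forall fun h => ((H.continuous_layerMass h).div_const _).aestronglyMeasurable)
    ?_ intervalIntegrable_const ?_
  · filter_upwards [Ioo_mem_nhdsGT one_pos] with h hh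
    refine ae_of_all _ fun t ht => ?_
    rw [uIoc_of_le h₁₂] at ht
    rw [norm_div, Real.norm_of_nonneg (sq_nonneg h), div_le_iff₀ (pow_pos hh.1 2)]
    refine H.abs_layerMass_le (h₁.trans ht.1) hh.1.le fun τ hτ x hx => hv τ ?_ x ?_
    · exact ⟨by linarith [hτ.1, ht.1], by linarith [hτ.2, ht.2, hh.2]⟩
    · exact ⟨hx.1, hx.2.trans (H.monotone_front (by linarith [ht.2, hh.2]))⟩
  · refine ae_of_all _ fun t ht => ?_
    rw [uIoc_of_le h₁₂] at ht
    exact H.tendsto_layerMass_div_sq (h₁.trans ht.1)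

lemma continuous_integral_temp_increment_sq (H : StefanFlow ε p S W v) (R h : ℝ) :
    Continuous fun t => ∫ x in (0 : ℝ)..R, (W (t + h) x - W t x) ^ 2 := by
  have hshift : Continuous fun q : ℝ × ℝ => W (q.1 + h) q.2 :=
    H.continuous_temp.comp (by fun_prop : Continuous fun q : ℝ × ℝ => (q.1 + h, q.2))
  exact intervalIntegral.continuous_parametric_intervalIntegral_of_continuous'
    ((hshift.sub H.continuous_temp).pow 2) _ _

lemma integral_temp_increment_mul_enthalpyTail_increment (H : StefanFlow ε p S W v)
    {t₁ t₂ h : ℝ} (h₁ : ε < t₁) (h₁₂ : t₁ ≤ t₂) (hh : 0 ≤ h) :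
    (∫ t in t₁..t₂, (W (t + h) 0 - W t 0) *
        (enthalpyTail S W (t + h) 0 - enthalpyTail S W t 0)) / h ^ 2 =
      ∫ t in t₁..t₂, (W (t + h) 0 - W t 0) / h * steklovAverage (fun τ => W τ 0 ^ p) h t := by
  rw [← intervalIntegral.integral_div]
  refine intervalIntegral.integral_congr fun t ht => ?_
  rw [uIcc_of_le h₁₂] at ht
  have hZ := H.integral_extendedFlux_time (a := t) (b := t + h) (x := 0) (h₁.trans_le ht.1)
    (by linarith) le_rfl
  simp only [H.extendedFlux_zero] at hZ
  simp only [steklovAverage, hZ]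
  ring

lemma timeQuotientEnergy_eq (H : StefanFlow ε p S W v) {t₁ t₂ R h : ℝ} (h₁ : ε < t₁)
    (h₁₂ : t₁ ≤ t₂) (hh : 0 ≤ h) (hR : S (t₂ + h) ≤ R) :
    timeQuotientEnergy W R t₁ t₂ h =
      (∫ t in t₁..t₂, (W (t + h) 0 - W t 0) / h * steklovAverage (fun τ => W τ 0 ^ p) h t) -
      (∫ t in t₁..t₂, layerMass S W h t / h ^ 2) -
      1 / 2 * ((∫ x in (0 : ℝ)..R,
          (enthalpyTail S W (t₂ + h) x - enthalpyTail S W t₂ x) ^ 2) / h ^ 2 -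
        (∫ x in (0 : ℝ)..R,
          (enthalpyTail S W (t₁ + h) x - enthalpyTail S W t₁ x) ^ 2) / h ^ 2) := by
  have hbdry : Continuous fun t =>
      (W (t + h) 0 - W t 0) * (enthalpyTail S W (t + h) 0 - enthalpyTail S W t 0) := by
    have hW := H.continuous_temp_time 0
    have hZ := H.continuous_enthalpyTail_time 0
    fun_prop
  have hbulk := H.continuous_integral_temp_increment_sq R h
  have hlayer := H.continuous_layerMass h
  have hftc := intervalIntegral.integral_eq_sub_of_hasDerivAt (a := t₁) (b := t₂)
    (fun t ht => by
      rw [uIcc_of_le h₁₂] at ht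
      exact H.hasDerivAt_integral_enthalpyTail_increment_sq_eq (h₁.trans_le ht.1) hh
        ((H.monotone_front (by linarith [ht.2])).trans hR))
    ((((hbdry.sub hbulk).sub hlayer).const_mul 2).intervalIntegrable _ _)
  have hdiff : Continuous fun t =>
      (W (t + h) 0 - W t 0) * (enthalpyTail S W (t + h) 0 - enthalpyTail S W t 0) -
        ∫ x in (0 : ℝ)..R, (W (t + h) x - W t x) ^ 2 := hbdry.sub hbulk
  simp only [Pi.sub_apply] at hftc
  rw [intervalIntegral.integral_const_mul,
    intervalIntegral.integral_sub (hdiff.intervalIntegrable _ _) (hlayer.intervalIntegrable _ _),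
    intervalIntegral.integral_sub (hbdry.intervalIntegrable _ _)
      (hbulk.intervalIntegrable _ _)] at hftc
  rw [timeQuotientEnergy, ← H.integral_temp_increment_mul_enthalpyTail_increment h₁ h₁₂ hh,
    intervalIntegral.integral_div, intervalIntegral.integral_div, ← sub_div, ← sub_div, ← hftc]
  ring

lemma tendsto_timeQuotientEnergy (H : StefanFlow ε p S W v) (hp : 1 ≤ p) {t₁ t₂ R : ℝ}
    (h₁ : ε < t₁) (h₁₂ : t₁ ≤ t₂) (hR : S (t₂ + 1) ≤ R) :
    Tendsto (timeQuotientEnergy W R t₁ t₂) (𝓝[>] 0)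
      (𝓝 (energy p S W t₁ - energy p S W t₂ - ∫ t in t₁..t₂, v t (S t) ^ 3 / 2)) := by
  have hSR : ∀ t ≤ t₂, S t ≤ R := fun t ht => (H.monotone_front (by linarith)).trans hR
  have hpow : ∀ y : ℝ, HasDerivAt (fun y : ℝ => y ^ (p + 1) / (p + 1)) (y ^ p) y := fun y => by
    have hp1 : p + 1 ≠ 0 := by linarith
    refine ((Real.hasDerivAt_rpow_const (Or.inr (by linarith))).div_const (p + 1)).congr_deriv ?_
    rw [add_sub_cancel_right, mul_div_cancel_left₀ _ hp1]
  obtain ⟨C, hC, hhol⟩ := H.exists_abs_temp_boundary_sub_le_sqrt t₂ h₁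
  have hboundary := tendsto_integral_differenceQuotient_mul_steklovAverage
    (H.continuous_temp_time 0) (fun y => Real.hasDerivAt_rpow_const (Or.inr hp))
    (continuous_const.mul (Real.continuous_rpow_const (by linarith))) hpow h₁₂ hC hhol
  have hlim := (hboundary.sub (H.tendsto_integral_layerMass_div_sq h₁ h₁₂)).sub
    (((H.tendsto_integral_enthalpyTail_quotient_sq (h₁.trans_le h₁₂) (hSR t₂ le_rfl)).sub
      (H.tendsto_integral_enthalpyTail_quotient_sq h₁ (hSR t₁ h₁₂))).const_mul (1 / 2))
  rw [(by rw [H.energy_eq, H.energy_eq]; ring : energy p S W t₁ - energy p S W t₂ -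
      (∫ t in t₁..t₂, v t (S t) ^ 3 / 2) = W t₂ 0 ^ (p + 1) / (p + 1) -
      W t₁ 0 ^ (p + 1) / (p + 1) - (∫ t in t₁..t₂, v t (S t) ^ 3 / 2) -
      1 / 2 * (dirichletIntegral S v t₂ - dirichletIntegral S v t₁))]
  refine hlim.congr' ?_
  filter_upwards [Ioo_mem_nhdsGT one_pos] with h hh
  exact (H.timeQuotientEnergy_eq h₁ h₁₂ hh.1.le
    ((H.monotone_front (by linarith [hh.2])).trans hR)).symm

end StefanFlow

/-! ### Levine's concavity argument -/

section Concavity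

variable {K K' G E : ℝ → ℝ} {T t₁ β p : ℝ}

lemma monotoneOn_mul_rpow_neg (hG' : ∀ t, T ≤ t → HasDerivAt G (K t) t)
    (hK' : ∀ t, T ≤ t → HasDerivAt K (K' t) t) (hG : ∀ t, T ≤ t → 0 < G t)
    (h : ∀ t, T ≤ t → (1 + β) * K t ^ 2 ≤ G t * K' t) :
    MonotoneOn (fun t => K t * G t ^ (-(1 + β))) (Ici T) := by
  have hderiv : ∀ t, T ≤ t → HasDerivAt (fun t => K t * G t ^ (-(1 + β)))
      ((G t * K' t - (1 + β) * K t ^ 2) * G t ^ (-(1 + β) - 1)) t := fun t ht => by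
    refine ((hK' t ht).mul ((hG' t ht).rpow_const (Or.inl (hG t ht).ne'))).congr_deriv ?_
    have hpow : G t ^ (-(1 + β)) = G t ^ (-(1 + β) - 1) * G t := by
      rw [← Real.rpow_add_one (hG t ht).ne', sub_add_cancel]
    rw [hpow]
    ring
  refine monotoneOn_of_hasDerivWithinAt_nonneg (convex_Ici T)
    (fun t ht => (hderiv t ht).continuousAt.continuousWithinAt)
    (fun t ht => (hderiv t (interior_subset ht)).hasDerivWithinAt) fun t ht => ?_
  have htT : T ≤ t := interior_subset ht
  exact mul_nonneg (sub_nonneg.2 (h t htT)) (Real.rpow_nonneg (hG t htT).le _)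

/-- `G ^ (-β)` is concave, hence below its tangent line at `T`, yet it stays positive. -/
lemma false_of_forall_sq_le_mul_deriv (hβ : 0 < β) (hG' : ∀ t, T ≤ t → HasDerivAt G (K t) t)
    (hK' : ∀ t, T ≤ t → HasDerivAt K (K' t) t) (hG : ∀ t, T ≤ t → 0 < G t) (hK : 0 < K T)
    (h : ∀ t, T ≤ t → (1 + β) * K t ^ 2 ≤ G t * K' t) : False := by
  set ρ := K T * G T ^ (-(1 + β))
  have hβρ : 0 < β * ρ := mul_pos hβ (mul_pos hK (Real.rpow_pos_of_pos (hG T le_rfl) _))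
  have hderiv : ∀ t, T ≤ t → HasDerivAt (fun t => G t ^ (-β) + β * ρ * t)
      (K t * (-β) * G t ^ (-β - 1) + β * ρ * 1) t := fun t ht =>
    ((hG' t ht).rpow_const (Or.inl (hG t ht).ne')).add ((hasDerivAt_id t).const_mul _)
  have hanti : AntitoneOn (fun t => G t ^ (-β) + β * ρ * t) (Ici T) := by
    refine antitoneOn_of_hasDerivWithinAt_nonpos (convex_Ici T)
      (fun t ht => (hderiv t ht).continuousAt.continuousWithinAt)
      (fun t ht => (hderiv t (interior_subset ht)).hasDerivWithinAt) fun t ht => ?_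
    have htT : t ∈ Ici T := interior_subset ht
    have hmono : ρ ≤ K t * G t ^ (-(1 + β)) :=
      monotoneOn_mul_rpow_neg hG' hK' hG h self_mem_Ici htT htT
    rw [← neg_add', add_comm β]
    nlinarith
  set t := T + G T ^ (-β) / (β * ρ) with ht
  have hTt : T ≤ t := le_add_of_nonneg_right
    (div_nonneg (Real.rpow_nonneg (hG T le_rfl).le _) hβρ.le)
  have htangent : G t ^ (-β) + β * ρ * t ≤ G T ^ (-β) + β * ρ * T := hanti self_mem_Ici hTt hTt
  have hlin : β * ρ * t = β * ρ * T + G T ^ (-β) := by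
    rw [ht, mul_add, mul_div_cancel₀ _ hβρ.ne']
  linarith [Real.rpow_pos_of_pos (hG t hTt) (-β)]

lemma sq_le_four_mul_mul_of_forall_le {d g e : ℝ} (hd : 0 < d) (hg : 0 < g)
    (h : ∀ l > 0, d ≤ l * g + e / l) : d ^ 2 ≤ 4 * g * e := by
  have key := h (d / (2 * g)) (by positivity)
  have hhalf : d / (2 * g) * g = d / 2 := by field_simp
  have hquot : e / (d / (2 * g)) = 2 * g * e / d := by field_simp
  rw [hhalf, hquot] at key
  have hle : d / 2 ≤ 2 * g * e / d := by linarith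
  rw [le_div_iff₀ hd] at hle
  nlinarith

lemma add_mul_sub_le_of_le_deriv {c : ℝ} (hK' : ∀ t, t₁ ≤ t → HasDerivAt K (K' t) t)
    (hc : ∀ t, t₁ ≤ t → c ≤ K' t) {t : ℝ} (ht : t₁ ≤ t) : K t₁ + c * (t - t₁) ≤ K t := by
  have key := (convex_Ici t₁).mul_sub_le_image_sub_of_le_deriv
    (fun τ hτ => (hK' τ hτ).continuousAt.continuousWithinAt)
    (fun τ hτ => (hK' τ (interior_subset hτ)).differentiableAt.differentiableWithinAt)
    (fun τ hτ => (hc τ (interior_subset hτ)).trans_eq (hK' τ (interior_subset hτ)).deriv.symm)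
    t₁ self_mem_Ici t ht ht
  linarith

lemma exists_forall_mul_le_sub {c θ : ℝ} (hc : 0 < c) (hθ : θ < 1)
    (hK : ∀ t, t₁ ≤ t → K t₁ + c * (t - t₁) ≤ K t) :
    ∃ T > t₁, ∀ t, T ≤ t → θ * K t ≤ K t - K t₁ := by
  have hlim : Tendsto (fun t => K t₁ + c * (t - t₁)) atTop atTop :=
    tendsto_atTop_add_const_left _ _
      ((tendsto_atTop_add_const_right _ (-t₁) tendsto_id).const_mul_atTop hc)
  obtain ⟨T, hT⟩ := ((hlim.eventually_ge_atTop (K t₁ / (1 - θ))).and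
    (eventually_gt_atTop t₁)).exists_forall_of_atTop
  refine ⟨T, (hT T le_rfl).2, fun t ht => ?_⟩
  have hle := (hT t ht).1.trans (hK t (hT t ht).2.le)
  rw [div_le_iff₀ (sub_pos.2 hθ)] at hle
  linarith

lemma nonneg_of_sq_sub_le_mul_sub (hp : 1 < p) (hK : Continuous K) (hK₁ : 0 ≤ K t₁)
    (hK' : ∀ t, t₁ ≤ t → HasDerivAt K (K' t) t)
    (hKE : ∀ t, t₁ ≤ t → -(2 * (p + 1) * E t) ≤ K' t) (hE : ∀ t, t₁ ≤ t → E t ≤ E t₁)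
    (hCS : ∀ t, t₁ ≤ t → 0 < K t - K t₁ → 0 < ∫ τ in t₁..t, K τ →
      (K t - K t₁) ^ 2 ≤ 4 * (∫ τ in t₁..t, K τ) * (E t₁ - E t)) : 0 ≤ E t₁ := by
  by_contra! hneg
  set c := -(2 * (p + 1) * E t₁)
  have hc0 : 0 < c := by nlinarith
  have hgrowth : ∀ t, t₁ ≤ t → K t₁ + c * (t - t₁) ≤ K t := fun t ht =>
    add_mul_sub_le_of_le_deriv hK' (fun τ hτ => by nlinarith [hKE τ hτ, hE τ hτ]) ht
  have hincr : ∀ t, t₁ < t → 0 < K t - K t₁ := fun t ht => by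
    linarith [hgrowth t ht.le, mul_pos hc0 (sub_pos.2 ht)]
  have hint : ∀ t, t₁ < t → 0 < ∫ τ in t₁..t, K τ := fun t ht =>
    intervalIntegral.intervalIntegral_pos_of_pos_on (hK.intervalIntegrable _ _)
      (fun τ hτ => by linarith [hincr τ hτ.1]) ht
  set θ := √(4 / (p + 3)) with hθ
  have hθsq : θ ^ 2 = 4 / (p + 3) := Real.sq_sqrt (by positivity)
  have hθ1 : θ < 1 := by
    rw [hθ, Real.sqrt_lt' one_pos, one_pow, div_lt_one (by linarith)]
    linarith
  obtain ⟨T, hT₁, hT⟩ := exists_forall_mul_le_sub hc0 hθ1 hgrowth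
  refine false_of_forall_sq_le_mul_deriv (β := (p - 1) / (p + 3)) (T := T) (K := K) (K' := K')
    (G := fun t => ∫ τ in t₁..t, K τ) (div_pos (by linarith) (by linarith))
    (fun t _ => (hK.integral_hasStrictDerivAt t₁ t).hasDerivAt)
    (fun t ht => hK' t (hT₁.le.trans ht)) (fun t ht => hint t (hT₁.trans_le ht))
    (by linarith [hincr T hT₁]) fun t ht => ?_
  have htt := hT₁.trans_le ht
  have hKt : 0 ≤ K t := by linarith [hincr t htt]
  have hG := hint t htt
  calc (1 + (p - 1) / (p + 3)) * K t ^ 2 = (p + 1) / 2 * (θ * K t) ^ 2 := by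
        rw [mul_pow, hθsq]
        field_simp
        ring
    _ ≤ (p + 1) / 2 * (K t - K t₁) ^ 2 := by gcongr; exact hT t ht
    _ ≤ (p + 1) / 2 * (4 * (∫ τ in t₁..t, K τ) * (E t₁ - E t)) := by
        gcongr
        exact hCS t htt.le (hincr t htt) hG
    _ = (∫ τ in t₁..t, K τ) * (2 * (p + 1) * (E t₁ - E t)) := by ring
    _ ≤ (∫ τ in t₁..t, K τ) * K' t := by
        gcongr
        linarith [hKE t htt.le]

end Concavity

/-! ### Energy decay and nonnegativity of the energy -/

/-- The squared norm `‖W(t)‖²` in `L²(0, S(t))`. -/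
def sqNorm (S : ℝ → ℝ) (W : ℝ → ℝ → ℝ) (t : ℝ) : ℝ := ∫ x in (0 : ℝ)..S t, W t x ^ 2

lemma timeQuotientEnergy_nonneg (W : ℝ → ℝ → ℝ) {R t₁ t₂ : ℝ} (h₁₂ : t₁ ≤ t₂) (hR : 0 ≤ R)
    (h : ℝ) : 0 ≤ timeQuotientEnergy W R t₁ t₂ h :=
  intervalIntegral.integral_nonneg h₁₂ fun _ _ =>
    div_nonneg (intervalIntegral.integral_nonneg hR fun _ _ => sq_nonneg _) (sq_nonneg _)

lemma sq_sub_sq_div_le {l h : ℝ} (hl : 0 < l) (hh : 0 < h) (a b : ℝ) :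
    (b ^ 2 - a ^ 2) / h ≤ l * a ^ 2 + (1 / l + h) * ((b - a) ^ 2 / h ^ 2) := by
  have key : l * a ^ 2 + (1 / l + h) * ((b - a) ^ 2 / h ^ 2) - (b ^ 2 - a ^ 2) / h =
      (l * h * a - (b - a)) ^ 2 / (l * h ^ 2) := by
    field_simp
    ring
  have hsq : 0 ≤ (l * h * a - (b - a)) ^ 2 / (l * h ^ 2) := by positivity
  linarith

namespace StefanFlow

variable {ε p : ℝ} {S : ℝ → ℝ} {W v : ℝ → ℝ → ℝ}

lemma front_velocity_nonneg (H : StefanFlow ε p S W v) {t : ℝ} (ht : ε < t) : 0 ≤ v t (S t) :=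
  (H.hasDerivAt_front t ht).deriv ▸ H.monotone_front.deriv_nonneg

lemma continuous_front_velocity (H : StefanFlow ε p S W v) : Continuous fun t => v t (S t) :=
  H.continuous_flux.comp (continuous_id.prodMk H.continuous_front)

lemma integral_front_velocity_cube_nonneg (H : StefanFlow ε p S W v) {t₁ t₂ : ℝ} (h₁ : ε < t₁)
    (h₁₂ : t₁ ≤ t₂) : 0 ≤ ∫ t in t₁..t₂, v t (S t) ^ 3 / 2 :=
  intervalIntegral.integral_nonneg h₁₂ fun t ht => by
    have := H.front_velocity_nonneg (h₁.trans_le ht.1)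
    positivity

lemma integral_front_velocity_cube_le (H : StefanFlow ε p S W v) (hp : 1 ≤ p) {t₁ t₂ : ℝ}
    (h₁ : ε < t₁) (h₁₂ : t₁ ≤ t₂) :
    ∫ t in t₁..t₂, v t (S t) ^ 3 / 2 ≤ energy p S W t₁ - energy p S W t₂ :=
  sub_nonneg.1 (ge_of_tendsto' (H.tendsto_timeQuotientEnergy hp h₁ h₁₂ le_rfl)
    (timeQuotientEnergy_nonneg W h₁₂ (H.front_pos _).le))

lemma energy_le_of_le (H : StefanFlow ε p S W v) (hp : 1 ≤ p) {t₁ t₂ : ℝ} (h₁ : ε < t₁)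
    (h₁₂ : t₁ ≤ t₂) : energy p S W t₂ ≤ energy p S W t₁ :=
  sub_nonneg.1 ((H.integral_front_velocity_cube_nonneg h₁ h₁₂).trans
    (H.integral_front_velocity_cube_le hp h₁ h₁₂))

/-- Jensen's inequality for the cube, via its tangent line at the mean velocity. -/
lemma front_sub_cube_le (H : StefanFlow ε p S W v) (hp : 1 ≤ p) {t₁ t₂ : ℝ} (h₁ : ε < t₁)
    (h₁₂ : t₁ < t₂) :
    (S t₂ - S t₁) ^ 3 / (2 * (t₂ - t₁) ^ 2) ≤ energy p S W t₁ - energy p S W t₂ := by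
  refine le_trans ?_ (H.integral_front_velocity_cube_le hp h₁ h₁₂.le)
  have hd : 0 < t₂ - t₁ := sub_pos.2 h₁₂
  set l := (S t₂ - S t₁) / (t₂ - t₁) with hl
  have hl0 : 0 ≤ l := div_nonneg (sub_nonneg.2 (H.monotone_front h₁₂.le)) hd.le
  have hv := H.continuous_front_velocity
  have hftc : ∫ t in t₁..t₂, v t (S t) = S t₂ - S t₁ :=
    intervalIntegral.integral_eq_sub_of_hasDerivAt (fun t ht =>
      H.hasDerivAt_front t (h₁.trans_le (uIcc_of_le h₁₂.le ▸ ht).1)) (hv.intervalIntegrable _ _)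
  calc (S t₂ - S t₁) ^ 3 / (2 * (t₂ - t₁) ^ 2)
      = ∫ t in t₁..t₂, (3 * l ^ 2 / 2 * v t (S t) - l ^ 3) := by
        rw [intervalIntegral.integral_sub ((hv.intervalIntegrable _ _).const_mul _)
          intervalIntegrable_const, intervalIntegral.integral_const_mul, hftc,
          intervalIntegral.integral_const, smul_eq_mul, hl]
        field_simp
        ring
    _ ≤ ∫ t in t₁..t₂, v t (S t) ^ 3 / 2 := by
        refine intervalIntegral.integral_mono_on h₁₂.le
          (((hv.const_mul _).sub continuous_const).intervalIntegrable _ _)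
          (((hv.pow 3).div_const 2).intervalIntegrable _ _) fun t ht => ?_
        have hvt := H.front_velocity_nonneg (h₁.trans_le ht.1)
        nlinarith [mul_nonneg (sq_nonneg (v t (S t) - l)) (by linarith : 0 ≤ v t (S t) + 2 * l)]

lemma continuous_sqNorm (H : StefanFlow ε p S W v) : Continuous (sqNorm S W) :=
  have hsq : Continuous (Function.uncurry fun t x => W t x ^ 2) := H.continuous_temp.pow 2
  intervalIntegral.continuous_parametric_intervalIntegral_of_continuous hsq H.continuous_front

lemma sqNorm_nonneg (H : StefanFlow ε p S W v) (t : ℝ) : 0 ≤ sqNorm S W t :=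
  intervalIntegral.integral_nonneg (H.front_pos t).le fun _ _ => sq_nonneg _

lemma dirichletIntegral_nonneg (H : StefanFlow ε p S W v) (t : ℝ) : 0 ≤ dirichletIntegral S v t :=
  intervalIntegral.integral_nonneg (H.front_pos t).le fun _ _ => sq_nonneg _

lemma integral_temp_mul_eq (H : StefanFlow ε p S W v) {t R : ℝ} (hR : S t ≤ R) (g : ℝ → ℝ) :
    ∫ x in (0 : ℝ)..R, W t x * g x = ∫ x in (0 : ℝ)..S t, W t x * g x := by
  rw [← intervalIntegral.integral_indicator ⟨(H.front_pos t).le, hR⟩]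
  congr 1 with x
  rcases le_or_gt x (S t) with hx | hx
  · rw [indicator_of_mem (by exact hx)]
  · rw [indicator_of_notMem (by exact hx.not_ge), H.temp_eq_zero t x hx.le, zero_mul]

lemma integral_temp_sq (H : StefanFlow ε p S W v) {t R : ℝ} (hR : S t ≤ R) :
    ∫ x in (0 : ℝ)..R, W t x ^ 2 = sqNorm S W t := by
  simp only [sqNorm, sq, H.integral_temp_mul_eq hR]

lemma hasDerivAt_sqNorm (H : StefanFlow ε p S W v) (hp : p + 1 ≠ 0) {t : ℝ} (ht : ε < t) :
    HasDerivAt (sqNorm S W) ((p - 1) * dirichletIntegral S v t - 2 * (p + 1) * energy p S W t)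
      t := by
  refine ((H.hasDerivAt_integral_temp_sq ht le_rfl).congr_of_eventuallyEq ?_).congr_deriv ?_
  · filter_upwards [gt_mem_nhds (lt_add_one t)] with b hb
    exact (H.integral_temp_sq (H.monotone_front hb.le)).symm
  · rw [H.integral_extendedFlux_sq (H.monotone_front (lt_add_one t).le), H.energy_eq,
      ← Real.rpow_add_one' (H.temp_nonneg t 0) hp]
    field_simp
    ring

lemma sqNorm_differenceQuotient_le (H : StefanFlow ε p S W v) {t h l R : ℝ} (hl : 0 < l)
    (hh : 0 < h) (hR : S (t + h) ≤ R) :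
    (sqNorm S W (t + h) - sqNorm S W t) / h ≤ l * sqNorm S W t +
      (1 / l + h) * ((∫ x in (0 : ℝ)..R, (W (t + h) x - W t x) ^ 2) / h ^ 2) := by
  have hW := H.continuous_temp_space
  have hsq : ∀ τ, IntervalIntegrable (fun x => W τ x ^ 2) volume 0 R := fun τ =>
    ((hW τ).pow 2).intervalIntegrable _ _
  have hdiff : IntervalIntegrable (fun x => (W (t + h) x - W t x) ^ 2 / h ^ 2) volume 0 R :=
    ((((hW _).sub (hW _)).pow 2).div_const _).intervalIntegrable _ _
  rw [← H.integral_temp_sq hR, ← H.integral_temp_sq ((H.monotone_front (by linarith)).trans hR),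
    ← intervalIntegral.integral_sub (hsq _) (hsq _), ← intervalIntegral.integral_div,
    ← intervalIntegral.integral_div, ← intervalIntegral.integral_const_mul,
    ← intervalIntegral.integral_const_mul,
    ← intervalIntegral.integral_add ((hsq _).const_mul _) (hdiff.const_mul _)]
  exact intervalIntegral.integral_mono_on ((H.front_pos _).le.trans hR)
    (((hsq _).sub (hsq _)).div_const _) (((hsq _).const_mul _).add (hdiff.const_mul _))
    fun x _ => sq_sub_sq_div_le hl hh _ _

lemma steklovAverage_sqNorm_sub_le (H : StefanFlow ε p S W v) {t₁ t₂ h l R : ℝ} (h₁₂ : t₁ ≤ t₂)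
    (hl : 0 < l) (hh : 0 < h) (hR : S (t₂ + h) ≤ R) :
    steklovAverage (sqNorm S W) h t₂ - steklovAverage (sqNorm S W) h t₁ ≤
      l * (∫ t in t₁..t₂, sqNorm S W t) + (1 / l + h) * timeQuotientEnergy W R t₁ t₂ h := by
  have hK := H.continuous_sqNorm
  have hquot : Continuous fun t => (sqNorm S W (t + h) - sqNorm S W t) / h := by fun_prop
  have hbulk := (H.continuous_integral_temp_increment_sq R h).div_const (h ^ 2)
  rw [timeQuotientEnergy, ← intervalIntegral.integral_eq_sub_of_hasDerivAt
      (fun t _ => hasDerivAt_steklovAverage hK h t) (hquot.intervalIntegrable _ _),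
    ← intervalIntegral.integral_const_mul, ← intervalIntegral.integral_const_mul,
    ← intervalIntegral.integral_add ((hK.const_mul _).intervalIntegrable _ _)
      ((hbulk.const_mul _).intervalIntegrable _ _)]
  refine intervalIntegral.integral_mono_on h₁₂ (hquot.intervalIntegrable _ _)
    (((hK.const_mul _).add (hbulk.const_mul _)).intervalIntegrable _ _) fun t ht => ?_
  exact H.sqNorm_differenceQuotient_le hl hh ((H.monotone_front (by linarith [ht.2])).trans hR)

lemma sqNorm_sub_le (H : StefanFlow ε p S W v) (hp : 1 ≤ p) {t₁ t₂ l : ℝ} (h₁ : ε < t₁)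
    (h₁₂ : t₁ ≤ t₂) (hl : 0 < l) :
    sqNorm S W t₂ - sqNorm S W t₁ ≤
      l * (∫ t in t₁..t₂, sqNorm S W t) + (energy p S W t₁ - energy p S W t₂) / l := by
  have hK := H.continuous_sqNorm
  have hid : Tendsto (fun h : ℝ => 1 / l + h) (𝓝[>] 0) (𝓝 (1 / l + 0)) :=
    tendsto_const_nhds.add nhdsWithin_le_nhds
  have key := le_of_tendsto_of_tendsto
    ((tendsto_steklovAverage hK t₂).sub (tendsto_steklovAverage hK t₁))
    ((hid.mul (H.tendsto_timeQuotientEnergy hp h₁ h₁₂ le_rfl)).const_add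
      (l * ∫ t in t₁..t₂, sqNorm S W t)) (by
      filter_upwards [Ioo_mem_nhdsGT one_pos] with h hh
      exact H.steklovAverage_sqNorm_sub_le h₁₂ hl hh.1
        (H.monotone_front (by linarith [hh.2])))
  refine key.trans ?_
  rw [add_zero, one_div, inv_mul_eq_div]
  refine add_le_add_right (div_le_div_of_nonneg_right ?_ hl.le) _
  linarith [H.integral_front_velocity_cube_nonneg h₁ h₁₂]

lemma energy_nonneg (H : StefanFlow ε p S W v) (hp : 1 < p) {t : ℝ} (ht : ε < t) :
    0 ≤ energy p S W t :=
  nonneg_of_sq_sub_le_mul_sub hp H.continuous_sqNorm (H.sqNorm_nonneg t)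
    (fun τ hτ => H.hasDerivAt_sqNorm (by linarith) (ht.trans_le hτ))
    (fun τ _ => by linarith [mul_nonneg (sub_nonneg.2 hp.le) (H.dirichletIntegral_nonneg τ)])
    (fun _ hτ => H.energy_le_of_le hp.le ht hτ)
    fun _ hτ hincr hint => sq_le_four_mul_mul_of_forall_le hincr hint fun _ hl =>
      H.sqNorm_sub_le hp.le ht hτ hl

end StefanFlow

/-! ### Lower bounds from test functions -/

lemma hasDerivAt_max_zero_pow (n : ℕ) (w : ℝ) :
    HasDerivAt (fun y : ℝ => max y 0 ^ (n + 2)) ((n + 2) * max w 0 ^ (n + 1)) w := by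
  rcases lt_trichotomy w 0 with hw | rfl | hw
  · rw [max_eq_right hw.le, zero_pow n.succ_ne_zero, mul_zero]
    refine (hasDerivAt_const w (0 : ℝ)).congr_of_eventuallyEq ?_
    filter_upwards [gt_mem_nhds hw] with y hy
    rw [max_eq_right (le_of_lt hy), zero_pow (by lia)]
  · have key := hasDerivAt_mul_of_eq_zero (hasDerivAt_id (0 : ℝ)) rfl
      (g := fun y => max y 0 ^ (n + 1)) (by fun_prop)
    refine (key.congr_of_eventuallyEq (Eventually.of_forall fun y => ?_)).congr_deriv (by simp)
    rcases le_total y 0 with hy | hy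
    · simp [hy]
    · simp [hy, pow_succ']
  · rw [max_eq_left hw.le]
    refine ((hasDerivAt_pow (n + 2) w).congr_of_eventuallyEq ?_).congr_deriv (by push_cast; rfl)
    filter_upwards [lt_mem_nhds hw] with y hy
    rw [max_eq_left (le_of_lt hy)]

namespace IsTestFunction

lemma max_zero_cube {f ft fx fxx : ℝ → ℝ → ℝ} (h : IsTestFunction f ft fx fxx) :
    IsTestFunction (fun t x => max (f t x) 0 ^ 3)
      (fun t x => 3 * max (f t x) 0 ^ 2 * ft t x) (fun t x => 3 * max (f t x) 0 ^ 2 * fx t x)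
      (fun t x => 6 * max (f t x) 0 * fx t x ^ 2 + 3 * max (f t x) 0 ^ 2 * fxx t x) := by
  obtain ⟨hf, hft, hfx, hfxx, dt, dx, dxx⟩ := h
  have d_sq (w : ℝ) := hasDerivAt_max_zero_pow 0 w
  have d_cube (w : ℝ) := hasDerivAt_max_zero_pow 1 w
  norm_num at d_sq d_cube
  simp only [Function.uncurry_def] at hf hft hfx hfxx
  refine ⟨?_, ?_, ?_, ?_, fun t x => ?_, fun t x => ?_, fun t x => ?_⟩
  any_goals simp only [Function.uncurry_def]; fun_prop
  · exact (d_cube (f t x)).comp t (dt t x)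
  · exact (d_cube (f t x)).comp x (dx t x)
  · exact ((((d_sq (f t x)).comp x (dx t x)).const_mul 3).mul (dxx t x)).congr_deriv
      (by simp only [Function.comp_apply]; ring)

lemma one_sub_exp_mul_cos (A l T : ℝ) :
    IsTestFunction (fun t x => 1 - A * exp (l ^ 2 * (t - T)) * cos (l * x))
      (fun t x => -(A * exp (l ^ 2 * (t - T)) * cos (l * x) * l ^ 2))
      (fun t x => A * exp (l ^ 2 * (t - T)) * sin (l * x) * l)
      (fun t x => A * exp (l ^ 2 * (t - T)) * cos (l * x) * l ^ 2) := by
  have d_lin (x : ℝ) : HasDerivAt (fun y => l * y) l x := by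
    simpa using (hasDerivAt_id x).const_mul l
  refine ⟨?_, ?_, ?_, ?_, fun t x => ?_, fun t x => ?_, fun t x => ?_⟩
  any_goals simp only [Function.uncurry_def]; fun_prop
  · have d := ((((hasDerivAt_id t).sub_const T).const_mul (l ^ 2)).exp.const_mul A).mul_const
      (cos (l * x))
    exact (d.const_sub 1).congr_deriv (by simp only [id]; ring)
  · exact (((d_lin x).cos.const_mul (A * exp (l ^ 2 * (t - T)))).const_sub 1).congr_deriv (by ring)
  · exact (((d_lin x).sin.const_mul (A * exp (l ^ 2 * (t - T)))).mul_const l).congr_deriv (by ring)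

lemma exp_mul_one_sub_sq (k : ℝ) :
    IsTestFunction (fun t x => exp (4 * k * t) * (1 - k * x ^ 2))
      (fun t x => 4 * k * exp (4 * k * t) * (1 - k * x ^ 2))
      (fun t x => exp (4 * k * t) * (-2 * k * x)) (fun t _ => exp (4 * k * t) * (-2 * k)) := by
  refine ⟨?_, ?_, ?_, ?_, fun t x => ?_, fun t x => ?_, fun t x => ?_⟩
  any_goals simp only [Function.uncurry_def]; fun_prop
  · exact (((hasDerivAt_id t).const_mul (4 * k)).exp.mul_const (1 - k * x ^ 2)).congr_deriv
      (by simp only [id]; ring)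
  · exact ((((hasDerivAt_pow 2 x).const_mul k).const_sub 1).const_mul
      (exp (4 * k * t))).congr_deriv (by push_cast; ring)
  · exact (((hasDerivAt_id x).const_mul (-2 * k)).const_mul (exp (4 * k * t))).congr_deriv
      (by ring)

end IsTestFunction

section CaloricBarrier

lemma one_le_mul_cos {y : ℝ} (hy : y ∈ Icc 0 (2 * (π / 5))) : 1 ≤ (1 + √5) * cos y := by
  have hsqrt : √5 ^ 2 = 5 := sq_sqrt (by norm_num)
  have hcos : (1 + √5) * cos (2 * (π / 5)) = 1 := by
    rw [cos_two_mul, cos_pi_div_five]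
    linear_combination (1 / 8 * √5 + 3 / 8) * hsqrt
  exact hcos.ge.trans (mul_le_mul_of_nonneg_left
    (cos_le_cos_of_nonneg_of_le_pi hy.1 (by linarith [pi_pos]) hy.2) (by positivity))

lemma one_add_sqrt_five_mul_exp_neg_four_le : (1 + √5) * exp (-4) ≤ 7 / 100 := by
  have hsqrt : √5 ≤ 9 / 4 := sqrt_le_iff.2 ⟨by norm_num, by norm_num⟩
  have hexp : (2.7 : ℝ) ^ 4 ≤ exp 4 := by
    rw [show (4 : ℝ) = (4 : ℕ) * 1 by norm_num, exp_nat_mul]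
    exact pow_le_pow_left₀ (by norm_num) (by linarith [exp_one_gt_d9]) 4
  rw [exp_neg, ← div_eq_mul_inv, div_le_iff₀ (exp_pos 4)]
  linarith

/-- A solution of the backward heat equation `∂ₜf + ∂ₓ²f = 0`, even in `x`, with `f ≤ 1` on
`[0, L]` and `f(T) ≤ 0` there, where `1 + √5 = 1 / cos (2π/5)`. -/
def caloricBarrier (L T t x : ℝ) : ℝ :=
  1 - (1 + √5) * exp ((2 * (π / 5) / L) ^ 2 * (t - T)) * cos (2 * (π / 5) / L * x)

variable {L x : ℝ}

lemma div_mul_mem_Icc (hL : 0 < L) (hx : x ∈ Icc 0 L) {a : ℝ} (ha : 0 ≤ a) :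
    a / L * x ∈ Icc 0 a := by
  refine ⟨mul_nonneg (div_nonneg ha hL.le) hx.1, ?_⟩
  rw [div_mul_eq_mul_div, div_le_iff₀ hL]
  exact mul_le_mul_of_nonneg_left hx.2 ha

lemma caloricBarrier_le_one_sub_exp (hL : 0 < L) (hx : x ∈ Icc 0 L) (T t : ℝ) :
    caloricBarrier L T t x ≤ 1 - exp ((2 * (π / 5) / L) ^ 2 * (t - T)) := by
  have hcos := one_le_mul_cos (div_mul_mem_Icc hL hx (by positivity))
  have hexp := mul_le_mul_of_nonneg_left hcos (exp_pos ((2 * (π / 5) / L) ^ 2 * (t - T))).le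
  rw [caloricBarrier]
  linarith

lemma caloricBarrier_le_one (hL : 0 < L) (hx : x ∈ Icc 0 L) (T t : ℝ) :
    caloricBarrier L T t x ≤ 1 :=
  (caloricBarrier_le_one_sub_exp hL hx T t).trans (sub_le_self 1 (exp_pos _).le)

lemma caloricBarrier_self_nonpos (hL : 0 < L) (hx : x ∈ Icc 0 L) (T : ℝ) :
    caloricBarrier L T T x ≤ 0 := by
  simpa using caloricBarrier_le_one_sub_exp hL hx T T

lemma le_caloricBarrier (hL : 0 < L) (t x : ℝ) :
    93 / 100 ≤ caloricBarrier L (t + 25 * L ^ 2 / π ^ 2) t x := by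
  have hexponent : (2 * (π / 5) / L) ^ 2 * (t - (t + 25 * L ^ 2 / π ^ 2)) = -4 := by
    field_simp
    ring
  have hcos := mul_le_mul_of_nonneg_left (cos_le_one (2 * (π / 5) / L * x))
    (by positivity : 0 ≤ (1 + √5) * exp (-4))
  rw [caloricBarrier, hexponent]
  linarith [one_add_sqrt_five_mul_exp_neg_four_le]

end CaloricBarrier

namespace StefanFlow

variable {ε p : ℝ} {S : ℝ → ℝ} {W v : ℝ → ℝ → ℝ}

/-- Each unit of latent heat lost at the front is weighted by at most `c`. -/
lemma integral_temp_mul_testFunction_add_front_le (H : StefanFlow ε p S W v)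
    {ψ ψt ψx ψxx : ℝ → ℝ → ℝ} (hψ : IsTestFunction ψ ψt ψx ψxx) {t₁ t₂ c : ℝ} (h₁ : ε < t₁)
    (h₁₂ : t₁ ≤ t₂) (hsub : ∀ t ∈ Icc t₁ t₂, ∀ x ∈ Icc 0 (S t), 0 ≤ ψt t x + ψxx t x)
    (hψ_zero : ∀ t, 0 ≤ ψ t 0) (hψx_zero : ∀ t, ψx t 0 = 0)
    (hψ_front : ∀ t ∈ Icc t₁ t₂, ψ t (S t) ≤ c) :
    (∫ x in (0 : ℝ)..S t₁, W t₁ x * ψ t₁ x) + c * S t₁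
      ≤ (∫ x in (0 : ℝ)..S t₂, W t₂ x * ψ t₂ x) + c * S t₂ := by
  have front_le {t : ℝ} (ht : t ≤ t₂ + 1) : S t ≤ S (t₂ + 1) := H.monotone_front ht
  rw [← H.integral_temp_mul_eq (front_le (by linarith)) (ψ t₁),
    ← H.integral_temp_mul_eq (front_le (by linarith)) (ψ t₂)]
  have d (t : ℝ) (ht : t ∈ Icc t₁ t₂) :=
    (H.hasDerivAt_integral_temp_mul_testFunction hψ (h₁.trans_le ht.1)
      (front_le (by linarith [ht.2]))).add
      ((H.hasDerivAt_front t (h₁.trans_le ht.1)).const_mul c)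
  refine monotoneOn_of_hasDerivWithinAt_nonneg (convex_Icc t₁ t₂)
    (fun t ht => (d t ht).continuousAt.continuousWithinAt)
    (fun t ht => (d t (interior_subset ht)).hasDerivWithinAt) (fun t ht => ?_)
    (left_mem_Icc.2 h₁₂) (right_mem_Icc.2 h₁₂) h₁₂
  replace ht := interior_subset ht
  rw [hψx_zero, H.integral_temp_mul_eq (front_le (by linarith [ht.2]))
    (fun x => ψt t x + ψxx t x)]
  have interior_nonneg : 0 ≤ ∫ x in (0 : ℝ)..S t, W t x * (ψt t x + ψxx t x) :=
    intervalIntegral.integral_nonneg (H.front_pos t).le fun x hx =>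
      mul_nonneg (H.temp_nonneg t x) (hsub t ht x hx)
  have inflow_nonneg : 0 ≤ W t 0 ^ p * ψ t 0 :=
    mul_nonneg (rpow_nonneg (H.temp_nonneg t 0) p) (hψ_zero t)
  have outflow_le : v t (S t) * ψ t (S t) ≤ v t (S t) * c :=
    mul_le_mul_of_nonneg_left (hψ_front t ht) (H.front_velocity_nonneg (h₁.trans_le ht.1))
  linarith

/-- For a subsolution `f` of the backward heat equation, `max f 0 ^ 3` is again one. -/
lemma integral_temp_mul_cube_add_front_le (H : StefanFlow ε p S W v) {f ft fx fxx : ℝ → ℝ → ℝ}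
    (hf : IsTestFunction f ft fx fxx) {t₁ t₂ : ℝ} (h₁ : ε < t₁) (h₁₂ : t₁ ≤ t₂)
    (hsub : ∀ t x, 0 ≤ ft t x + fxx t x) (hfx_zero : ∀ t, fx t 0 = 0)
    (hf_front : ∀ t ∈ Icc t₁ t₂, f t (S t) ≤ 1) :
    (∫ x in (0 : ℝ)..S t₁, W t₁ x * max (f t₁ x) 0 ^ 3) + S t₁
      ≤ (∫ x in (0 : ℝ)..S t₂, W t₂ x * max (f t₂ x) 0 ^ 3) + S t₂ := by
  have m_nonneg (t x : ℝ) : 0 ≤ max (f t x) 0 := le_max_right _ _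
  have key := H.integral_temp_mul_testFunction_add_front_le hf.max_zero_cube (c := 1) h₁ h₁₂
    (fun t _ x _ => ?_) (fun t => pow_nonneg (m_nonneg t 0) 3) (fun t => by simp [hfx_zero])
    (fun t ht => pow_le_one₀ (m_nonneg _ _) (max_le (hf_front t ht) zero_le_one))
  · simpa only [one_mul] using key
  · have := m_nonneg t x
    calc 0 ≤ 6 * max (f t x) 0 * fx t x ^ 2 + 3 * max (f t x) 0 ^ 2 * (ft t x + fxx t x) :=
          add_nonneg (by positivity) (mul_nonneg (by positivity) (hsub t x))
      _ = _ := by ring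

lemma L1Norm_nonneg (H : StefanFlow ε p S W v) (t : ℝ) : 0 ≤ L1Norm S W t :=
  intervalIntegral.integral_nonneg (H.front_pos t).le fun x _ => H.temp_nonneg t x

lemma cube_mul_L1Norm_le (H : StefanFlow ε p S W v) {f : ℝ → ℝ} {c : ℝ} (hc : 0 ≤ c)
    (hf : Continuous f) (hcf : ∀ x, c ≤ f x) (t : ℝ) :
    c ^ 3 * L1Norm S W t ≤ ∫ x in (0 : ℝ)..S t, W t x * max (f x) 0 ^ 3 := by
  have hW := H.continuous_temp_space t
  rw [L1Norm, ← intervalIntegral.integral_const_mul]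
  refine intervalIntegral.integral_mono_on (H.front_pos t).le
    ((hW.const_mul _).intervalIntegrable _ _)
    ((hW.mul ((hf.max continuous_const).pow 3)).intervalIntegrable _ _) fun x _ => ?_
  rw [mul_comm]
  exact mul_le_mul_of_nonneg_left (pow_le_pow_left₀ hc (le_max_of_le_left (hcf x)) 3)
    (H.temp_nonneg t x)

lemma mul_L1Norm_le_front_sub (H : StefanFlow ε p S W v) {t L T : ℝ} (ht : ε < t)
    (hL : L = S t + L1Norm S W t) (hT : T = t + 25 * L ^ 2 / π ^ 2) :
    (93 / 100) ^ 3 * L1Norm S W t ≤ S T - S t := by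
  have hM := H.L1Norm_nonneg t
  have hL_pos : 0 < L := by linarith [H.front_pos t]
  have htT : t ≤ T := by
    rw [hT]
    exact le_add_of_nonneg_right (by positivity)
  rcases le_or_gt (S T) L with hST | hST
  swap
  · linarith
  have front_mem {τ : ℝ} (hτ : τ ≤ T) : Icc 0 (S τ) ⊆ Icc 0 L :=
    Icc_subset_Icc_right ((H.monotone_front hτ).trans hST)
  have key := H.integral_temp_mul_cube_add_front_le (f := caloricBarrier L T)
    (IsTestFunction.one_sub_exp_mul_cos _ _ _) ht htT (fun t x => by rw [neg_add_cancel])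
    (fun t => by simp) fun τ hτ => caloricBarrier_le_one hL_pos
      (front_mem hτ.2 (right_mem_Icc.2 (H.front_pos τ).le)) T τ
  have final_eq_zero : ∫ x in (0 : ℝ)..S T, W T x * max (caloricBarrier L T T x) 0 ^ 3 = 0 := by
    rw [intervalIntegral.integral_congr (g := fun _ => 0), intervalIntegral.integral_zero]
    intro x hx
    rw [uIcc_of_le (H.front_pos T).le] at hx
    simp [caloricBarrier_self_nonpos hL_pos (front_mem le_rfl hx) T]
  have initial_ge : (93 / 100) ^ 3 * L1Norm S W t
      ≤ ∫ x in (0 : ℝ)..S t, W t x * max (caloricBarrier L T t x) 0 ^ 3 :=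
    H.cube_mul_L1Norm_le (by norm_num) (by unfold caloricBarrier; fun_prop)
      (fun x => hT ▸ le_caloricBarrier hL_pos t x) t
  linarith

/-- The front moves by at least `(93/100)³ M` within time `25 L² / π²`, and the energy pays for
this by at least the cube of the displacement over twice the squared time. -/
lemma le_energy (H : StefanFlow ε p S W v) (hp : 1 < p) {t : ℝ} (ht : ε < t) :
    π ^ 2 / 256 * L1Norm S W t ^ 3 / (S t + L1Norm S W t) ^ 4 ≤ energy p S W t := by
  have hM := H.L1Norm_nonneg t
  set M := L1Norm S W t
  set L := S t + M with hL
  have hL_pos : 0 < L := add_pos_of_pos_of_nonneg (H.front_pos t) hM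
  set T := t + 25 * L ^ 2 / π ^ 2 with hT
  have htT : t < T := lt_add_of_pos_right t (by positivity)
  have hadvance : (93 / 100) ^ 3 * M ≤ S T - S t := H.mul_L1Norm_le_front_sub ht hL hT
  have hconst : 1 / 256 ≤ (93 / 100) ^ 9 * π ^ 2 / 1250 := by nlinarith [pi_gt_d2]
  calc π ^ 2 / 256 * M ^ 3 / L ^ 4 = 1 / 256 * (π ^ 2 * M ^ 3 / L ^ 4) := by ring
    _ ≤ (93 / 100) ^ 9 * π ^ 2 / 1250 * (π ^ 2 * M ^ 3 / L ^ 4) := by gcongr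
    _ = ((93 / 100) ^ 3 * M) ^ 3 / (2 * (T - t) ^ 2) := by
        rw [hT, add_sub_cancel_left]
        field_simp
        ring
    _ ≤ (S T - S t) ^ 3 / (2 * (T - t) ^ 2) := by gcongr
    _ ≤ energy p S W t - energy p S W T := H.front_sub_cube_le hp.le ht htT
    _ ≤ energy p S W t := sub_le_self _ (H.energy_nonneg hp (ht.trans htT))

lemma integral_temp_mul_exp_mul_cube_le (H : StefanFlow ε p S W v) {k a t : ℝ} (hk : 0 ≤ k)
    (ha : ε < a) (hat : a ≤ t) (hka : 1 ≤ k * S a ^ 2) :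
    ∫ x in (0 : ℝ)..S a, W a x * max (exp (4 * k * a) * (1 - k * x ^ 2)) 0 ^ 3
      ≤ ∫ x in (0 : ℝ)..S t, W t x * max (exp (4 * k * t) * (1 - k * x ^ 2)) 0 ^ 3 := by
  have key := H.integral_temp_mul_testFunction_add_front_le (c := 0)
    (IsTestFunction.exp_mul_one_sub_sq k).max_zero_cube ha hat (fun t _ x _ => ?_)
    (fun t => pow_nonneg (le_max_right _ _) 3) (fun t => by simp) (fun τ hτ => ?_)
  · simpa only [zero_mul, add_zero] using key
  · rcases le_total (1 - k * x ^ 2) 0 with hy | hy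
    · simp [mul_nonpos_of_nonneg_of_nonpos (exp_pos (4 * k * t)).le hy]
    · rw [max_eq_left (by positivity)]
      set y := 1 - k * x ^ 2 with hy_def
      have hquad : 0 ≤ 2 * y ^ 2 - 5 * y + 4 := by nlinarith [sq_nonneg (y - 5 / 4)]
      calc 0 ≤ 6 * k * exp (4 * k * t) ^ 3 * y * (2 * y ^ 2 - 5 * y + 4) := by positivity
        _ = _ := by
          rw [hy_def]
          ring
  · have hfront : 1 - k * S τ ^ 2 ≤ 0 := by
      have := mul_le_mul_of_nonneg_left
        (pow_le_pow_left₀ (H.front_pos a).le (H.monotone_front hτ.1) 2) hk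
      linarith
    simp [mul_nonpos_of_nonneg_of_nonpos (exp_pos (4 * k * τ)).le hfront]

lemma L1Norm_pos (H : StefanFlow ε p S W v) {a t x₀ : ℝ} (ha : ε < a) (hat : a ≤ t)
    (hx₀ : x₀ ∈ Ioo 0 (S a)) (hW₀ : 0 < W a x₀) : 0 < L1Norm S W t := by
  have hS := H.front_pos a
  set k := 1 / S a ^ 2
  have hkS : k * S a ^ 2 = 1 := one_div_mul_cancel (by positivity)
  let m : ℝ → ℝ → ℝ := fun τ x => max (exp (4 * k * τ) * (1 - k * x ^ 2)) 0
  have hm (τ x : ℝ) : 0 ≤ m τ x := le_max_right _ _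
  have hm_cont (τ : ℝ) : Continuous fun x => W τ x * m τ x ^ 3 := by
    have := H.continuous_temp_space τ
    fun_prop
  have initial_pos : 0 < ∫ x in (0 : ℝ)..S a, W a x * m a x ^ 3 := by
    refine intervalIntegral.integral_pos hS (hm_cont a).continuousOn
      (fun x _ => mul_nonneg (H.temp_nonneg _ _) (pow_nonneg (hm _ x) 3))
      ⟨x₀, Ioo_subset_Icc_self hx₀, mul_pos hW₀ (pow_pos (lt_max_of_lt_left ?_) 3)⟩
    refine mul_pos (exp_pos _) (sub_pos.2 (hkS ▸ ?_))
    gcongr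
    exacts [hx₀.1.le, hx₀.2]
  have final_le : ∫ x in (0 : ℝ)..S t, W t x * m t x ^ 3 ≤ exp (4 * k * t) ^ 3 * L1Norm S W t := by
    rw [L1Norm, ← intervalIntegral.integral_const_mul]
    refine intervalIntegral.integral_mono_on (H.front_pos t).le
      ((hm_cont t).intervalIntegrable _ _)
      (((H.continuous_temp_space t).const_mul _).intervalIntegrable _ _) fun x _ => ?_
    rw [mul_comm]
    refine mul_le_mul_of_nonneg_right (pow_le_pow_left₀ (hm t x) (max_le ?_ (exp_pos _).le) 3)
      (H.temp_nonneg t x)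
    exact mul_le_of_le_one_right (exp_pos _).le (sub_le_self 1 (by positivity))
  have hmono := H.integral_temp_mul_exp_mul_cube_le (by positivity) ha hat hkS.ge
  exact pos_of_mul_pos_right (initial_pos.trans_le (hmono.trans final_le)) (by positivity)

end StefanFlow

/-! ### From solutions to flows -/

lemma deriv_nonpos_of_nonneg_of_eq_zero {f : ℝ → ℝ} {a b : ℝ} (hab : a < b)
    (hf : ContinuousOn f (Icc a b)) (hf' : DifferentiableOn ℝ f (Ioo a b))
    (hdf : ContinuousOn (deriv f) (Icc a b)) (hnonneg : ∀ x ∈ Icc a b, 0 ≤ f x) (hb : f b = 0) :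
    deriv f b ≤ 0 := by
  have hb_mem : b ∈ Icc a b := right_mem_Icc.2 hab.le
  have hIoo : Ioo a b ∈ 𝓝[<] b := Ioo_mem_nhdsLT hab
  have hlim : Tendsto (deriv f) (𝓝[<] b) (𝓝 (deriv f b)) :=
    (hdf b hb_mem).mono_of_mem_nhdsWithin (mem_of_superset hIoo Ioo_subset_Icc_self)
  have hderiv : HasDerivWithinAt f (deriv f b) (Iio b) b :=
    (hasDerivWithinAt_Iic_of_tendsto_deriv hf' ((hf b hb_mem).mono Ioo_subset_Icc_self) hIoo
      hlim).mono Iio_subset_Iic_self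
  refine le_of_tendsto ((hasDerivWithinAt_iff_tendsto_slope' self_notMem_Iio).1 hderiv) ?_
  filter_upwards [hIoo] with x hx
  rw [slope_def_field, hb]
  exact div_nonpos_of_nonneg_of_nonpos (by linarith [hnonneg x (Ioo_subset_Icc_self hx)])
    (by linarith [hx.2])

lemma integral_time_sub_eq_integral_space_sub {w wx g : ℝ → ℝ → ℝ} {a b x₁ x₂ : ℝ} (hab : a ≤ b)
    (hx : x₁ ≤ x₂) (hg : ContinuousOn (Function.uncurry g) (Icc a b ×ˢ Icc x₁ x₂))
    (hw : ∀ t ∈ Icc a b, ∀ x ∈ Icc x₁ x₂, HasDerivAt (fun τ => w τ x) (g t x) t)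
    (hwx : ∀ t ∈ Icc a b, ∀ x ∈ Icc x₁ x₂, HasDerivAt (wx t) (g t x) x) :
    ∫ x in x₁..x₂, (w b x - w a x) = ∫ t in a..b, (wx t x₂ - wx t x₁) := by
  have time (x : ℝ) (h : x ∈ Icc x₁ x₂) : ∫ t in a..b, g t x = w b x - w a x := by
    refine intervalIntegral.integral_eq_sub_of_hasDerivAt (f := fun t => w t x) (fun t ht => ?_)
      (ContinuousOn.intervalIntegrable ?_)
    · exact hw t (uIcc_of_le hab ▸ ht) x h
    · rw [uIcc_of_le hab]
      exact hg.comp (f := fun t => (t, x)) (by fun_prop) fun t ht => ⟨ht, h⟩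
  have space (t : ℝ) (h : t ∈ Icc a b) : ∫ x in x₁..x₂, g t x = wx t x₂ - wx t x₁ := by
    refine intervalIntegral.integral_eq_sub_of_hasDerivAt (fun x hx' => ?_)
      (ContinuousOn.intervalIntegrable ?_)
    · exact hwx t h x (uIcc_of_le hx ▸ hx')
    · rw [uIcc_of_le hx]
      exact hg.comp (f := fun x => (t, x)) (by fun_prop) fun x hx' => ⟨h, hx'⟩
  have hint : IntegrableOn (Function.uncurry g) (uIoc a b ×ˢ uIoc x₁ x₂) := by
    rw [uIoc_of_le hab, uIoc_of_le hx]
    exact (hg.integrableOn_compact (isCompact_Icc.prod isCompact_Icc)).mono_set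
      (prod_mono Ioc_subset_Icc_self Ioc_subset_Icc_self)
  calc ∫ x in x₁..x₂, (w b x - w a x) = ∫ x in x₁..x₂, ∫ t in a..b, g t x :=
        intervalIntegral.integral_congr fun x h => (time x (uIcc_of_le hx ▸ h)).symm
    _ = ∫ t in a..b, ∫ x in x₁..x₂, g t x := (intervalIntegral_intervalIntegral_swap hint).symm
    _ = ∫ t in a..b, (wx t x₂ - wx t x₁) :=
        intervalIntegral.integral_congr fun t h => space t (uIcc_of_le hab ▸ h)

lemma eqOn_Icc_of_eq_on_Ioo {P : ℝ → ℝ} {l : ℝ} (hl : 0 < l) (hP : Continuous P)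
    (h : ∀ x₁ x₂, 0 < x₁ → x₁ ≤ x₂ → x₂ < l → P x₁ = P x₂) :
    EqOn P (fun _ => P 0) (Icc 0 l) := by
  have hconst : EqOn P (fun _ => P (l / 2)) (Icc 0 l) := by
    rw [← closure_Ioo hl.ne]
    refine EqOn.closure (fun x hx => ?_) hP continuous_const
    rcases le_total x (l / 2) with hxl | hxl
    · exact h _ _ hx.1 hxl (by linarith)
    · exact (h _ _ (by linarith) hxl hx.2).symm
  exact fun x hx => (hconst hx).trans (hconst (left_mem_Icc.2 hl.le)).symm

lemma continuousOn_of_forall_Ioc {f : ℝ × ℝ → ℝ} {A : ℝ → Set ℝ}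
    (h : ∀ T : ℝ, 0 < T → ContinuousOn f {q : ℝ × ℝ | q.1 ∈ Ioc 0 T ∧ q.2 ∈ A q.1}) :
    ContinuousOn f {q : ℝ × ℝ | 0 < q.1 ∧ q.2 ∈ A q.1} := by
  intro q hq
  have hT := h (q.1 + 1) (by linarith [hq.1]) q ⟨⟨hq.1, by linarith⟩, hq.2⟩
  refine hT.mono_of_mem_nhdsWithin ?_
  have hlt : {r : ℝ × ℝ | r.1 < q.1 + 1} ∈ 𝓝 q :=
    (isOpen_lt continuous_fst continuous_const).mem_nhds (lt_add_one q.1)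
  filter_upwards [mem_nhdsWithin_of_mem_nhds hlt, self_mem_nhdsWithin] with r hr hr'
  exact ⟨⟨hr'.1, le_of_lt hr⟩, hr'.2⟩

/-- The extension of `f` from `{(t, x) | ε ≤ t, 0 ≤ x ≤ s t}` to the whole plane obtained by
clamping first `t` to `[ε, ∞)` and then `x` to `[0, s t]`. -/
def clampedExtension (ε : ℝ) (s : ℝ → ℝ) (f : ℝ → ℝ → ℝ) (t x : ℝ) : ℝ :=
  f (max t ε) (max 0 (min x (s (max t ε))))

lemma clampedExtension_of_mem {ε t x : ℝ} {s : ℝ → ℝ} {f : ℝ → ℝ → ℝ}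
    (hx : x ∈ Icc 0 (s (max t ε))) : clampedExtension ε s f t x = f (max t ε) x := by
  rw [clampedExtension, min_eq_left hx.2, max_eq_right hx.1]

lemma clampedExtension_of_front_le {ε t x : ℝ} {s : ℝ → ℝ} {f : ℝ → ℝ → ℝ}
    (hs : 0 ≤ s (max t ε)) (hx : s (max t ε) ≤ x) :
    clampedExtension ε s f t x = f (max t ε) (s (max t ε)) := by
  rw [clampedExtension, min_eq_right hx, max_eq_right hs]

namespace IsGlobalSol

variable {p s₀ : ℝ} {φ : ℝ → ℝ} {s : ℝ → ℝ} {u : ℝ → ℝ → ℝ} {ε : ℝ}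

lemma front_pos (hsol : IsGlobalSol p s₀ φ s u) {t : ℝ} (ht : 0 < t) : 0 < s t :=
  (hsol t ht).s_pos t (right_mem_Icc.2 ht.le)

lemma hasDerivAt_front (hsol : IsGlobalSol p s₀ φ s u) {t : ℝ} (ht : 0 < t) :
    HasDerivAt s (-deriv (u t) (s t)) t := by
  have ht_mem : t ∈ Ioc 0 t := right_mem_Ioc.2 ht
  rw [← (hsol t ht).stefan t ht_mem]
  exact ((hsol t ht).s_diff t ht_mem).hasDerivAt

lemma continuousOn_temp (hsol : IsGlobalSol p s₀ φ s u) :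
    ContinuousOn (fun q : ℝ × ℝ => u q.1 q.2) {q : ℝ × ℝ | 0 < q.1 ∧ q.2 ∈ Icc 0 (s q.1)} :=
  continuousOn_of_forall_Ioc (A := fun t => Icc 0 (s t)) fun T hT =>
    (hsol T hT).u_cont.mono fun _ hq => ⟨Ioc_subset_Icc_self hq.1, hq.2⟩

lemma continuousOn_deriv_temp (hsol : IsGlobalSol p s₀ φ s u) :
    ContinuousOn (fun q : ℝ × ℝ => deriv (u q.1) q.2)
      {q : ℝ × ℝ | 0 < q.1 ∧ q.2 ∈ Icc 0 (s q.1)} :=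
  continuousOn_of_forall_Ioc (A := fun t => Icc 0 (s t)) fun T hT => (hsol T hT).ux_cont

lemma deriv_temp_front_nonpos (hsol : IsGlobalSol p s₀ φ s u) {t : ℝ} (ht : 0 < t) :
    deriv (u t) (s t) ≤ 0 := by
  have H := hsol t ht
  have ht_mem : t ∈ Ioc 0 t := right_mem_Ioc.2 ht
  refine deriv_nonpos_of_nonneg_of_eq_zero (hsol.front_pos ht) ?_
    (fun x hx => (H.ux_diff t ht_mem x hx).differentiableWithinAt) ?_
    (H.u_nonneg t (Ioc_subset_Icc_self ht_mem)) (H.bc_free t ht_mem)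
  · exact hsol.continuousOn_temp.comp (f := fun x => (t, x)) (by fun_prop) fun x hx => ⟨ht, hx⟩
  · exact hsol.continuousOn_deriv_temp.comp (f := fun x => (t, x)) (by fun_prop)
      fun x hx => ⟨ht, hx⟩

lemma monotoneOn_front (hsol : IsGlobalSol p s₀ φ s u) : MonotoneOn s (Ioi 0) := by
  refine monotoneOn_of_hasDerivWithinAt_nonneg (f' := fun t => -deriv (u t) (s t)) (convex_Ioi 0)
    (fun t ht => (hsol.hasDerivAt_front ht).continuousAt.continuousWithinAt) ?_ ?_
  · exact fun t ht => (hsol.hasDerivAt_front (interior_subset ht)).hasDerivWithinAt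
  · exact fun t ht => neg_nonneg.2 (hsol.deriv_temp_front_nonpos (interior_subset ht))

lemma interior_balance (hsol : IsGlobalSol p s₀ φ s u) {a b x₁ x₂ : ℝ} (ha : 0 < a) (hab : a ≤ b)
    (h₁ : 0 < x₁) (h₁₂ : x₁ ≤ x₂) (h₂ : x₂ < s a) :
    ∫ y in x₁..x₂, (u b y - u a y) = ∫ τ in a..b, (deriv (u τ) x₂ - deriv (u τ) x₁) := by
  have pos (t : ℝ) (ht : t ∈ Icc a b) : 0 < t := ha.trans_le ht.1
  have interior (t : ℝ) (ht : t ∈ Icc a b) (x : ℝ) (hx : x ∈ Icc x₁ x₂) : x ∈ Ioo 0 (s t) :=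
    ⟨h₁.trans_le hx.1,
      (hx.2.trans_lt h₂).trans_le (hsol.monotoneOn_front ha (pos t ht) ht.1)⟩
  refine integral_time_sub_eq_integral_space_sub (g := fun t => deriv (deriv (u t))) hab h₁₂ ?_
    (fun t ht x hx => ?_) fun t ht x hx => ?_
  · exact (continuousOn_of_forall_Ioc (A := fun t => Ioo 0 (s t)) fun T hT =>
      (hsol T hT).uxx_cont).mono fun q hq => ⟨pos q.1 hq.1, interior q.1 hq.1 q.2 hq.2⟩
  · have ht_mem : t ∈ Ioc 0 t := right_mem_Ioc.2 (pos t ht)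
    rw [← (hsol t (pos t ht)).heat t ht_mem x (interior t ht x hx)]
    exact ((hsol t (pos t ht)).ut_diff t ht_mem x (interior t ht x hx)).hasDerivAt
  · exact ((hsol t (pos t ht)).uxx_diff t (right_mem_Ioc.2 (pos t ht)) x
      (interior t ht x hx)).hasDerivAt

lemma continuous_clampedFront (hsol : IsGlobalSol p s₀ φ s u) (hε : 0 < ε) :
    Continuous fun t => s (max t ε) :=
  ContinuousOn.comp_continuous (s := Ioi 0)
    (fun _ ht => (hsol.hasDerivAt_front ht).continuousAt.continuousWithinAt) (by fun_prop)
    fun _ => mem_Ioi.2 (lt_max_of_lt_right hε)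

lemma continuous_clampedExtension (hsol : IsGlobalSol p s₀ φ s u) (hε : 0 < ε) {f : ℝ → ℝ → ℝ}
    (hf : ContinuousOn (Function.uncurry f) {q : ℝ × ℝ | 0 < q.1 ∧ q.2 ∈ Icc 0 (s q.1)}) :
    Continuous (Function.uncurry (clampedExtension ε s f)) := by
  have hs : Continuous fun q : ℝ × ℝ => s (max q.1 ε) :=
    (hsol.continuous_clampedFront hε).comp continuous_fst
  refine hf.comp_continuous (f := fun q : ℝ × ℝ => (max q.1 ε, max 0 (min q.2 (s (max q.1 ε)))))
    ((continuous_fst.max continuous_const).prodMk (continuous_const.max (continuous_snd.min hs)))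
    fun q => ?_
  have hq : 0 < max q.1 ε := lt_max_of_lt_right hε
  exact ⟨hq, le_max_left _ _, max_le (hsol.front_pos hq).le (min_le_right _ _)⟩

lemma clampedExtension_of_le (hsol : IsGlobalSol p s₀ φ s u) (hε : 0 < ε) (f : ℝ → ℝ → ℝ)
    {a t x : ℝ} (ha : ε ≤ a) (hat : a ≤ t) (hx : x ∈ Icc 0 (s a)) :
    clampedExtension ε s f t x = f t x := by
  have ha₀ : 0 < a := hε.trans_le ha
  have hmax : max t ε = t := max_eq_left (ha.trans hat)
  have hx' : x ∈ Icc 0 (s t) :=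
    ⟨hx.1, hx.2.trans (hsol.monotoneOn_front ha₀ (ha₀.trans_le hat) hat)⟩
  rw [clampedExtension_of_mem (hmax.symm ▸ hx'), hmax]

lemma interior_balance_clampedExtension (hsol : IsGlobalSol p s₀ φ s u) (hε : 0 < ε)
    {a b x₁ x₂ : ℝ} (ha : ε < a) (hab : a ≤ b) (h₁ : 0 < x₁) (h₁₂ : x₁ ≤ x₂) (h₂ : x₂ < s a) :
    ∫ y in x₁..x₂, (clampedExtension ε s u b y - clampedExtension ε s u a y) =
      ∫ τ in a..b, (clampedExtension ε s (fun t x => -deriv (u t) x) τ x₁ -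
        clampedExtension ε s (fun t x => -deriv (u t) x) τ x₂) := by
  have hsub {y : ℝ} (hy : y ∈ Icc x₁ x₂) : y ∈ Icc 0 (s a) :=
    ⟨h₁.le.trans hy.1, hy.2.trans h₂.le⟩
  calc ∫ y in x₁..x₂, (clampedExtension ε s u b y - clampedExtension ε s u a y)
      = ∫ y in x₁..x₂, (u b y - u a y) := by
        refine intervalIntegral.integral_congr fun y hy => ?_
        rw [uIcc_of_le h₁₂] at hy
        simp only [hsol.clampedExtension_of_le hε u ha.le hab (hsub hy),
          hsol.clampedExtension_of_le hε u ha.le le_rfl (hsub hy)]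
    _ = ∫ τ in a..b, (deriv (u τ) x₂ - deriv (u τ) x₁) :=
        hsol.interior_balance (hε.trans ha) hab h₁ h₁₂ h₂
    _ = _ := by
        refine intervalIntegral.integral_congr fun τ hτ => ?_
        rw [uIcc_of_le hab] at hτ
        simp only [hsol.clampedExtension_of_le hε _ ha.le hτ.1 (hsub (left_mem_Icc.2 h₁₂)),
          hsol.clampedExtension_of_le hε _ ha.le hτ.1 (hsub (right_mem_Icc.2 h₁₂))]
        ring

lemma balance_clampedExtension (hsol : IsGlobalSol p s₀ φ s u) (hε : 0 < ε) {a b x : ℝ}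
    (ha : ε < a) (hab : a ≤ b) (hx : x ∈ Icc 0 (s a)) :
    ∫ y in (0 : ℝ)..x, (clampedExtension ε s u b y - clampedExtension ε s u a y) =
      ∫ τ in a..b, (clampedExtension ε s (fun t x => -deriv (u t) x) τ 0 -
        clampedExtension ε s (fun t x => -deriv (u t) x) τ x) := by
  set W := clampedExtension ε s u
  set v := clampedExtension ε s (fun t x => -deriv (u t) x)
  have W_cont : Continuous (Function.uncurry W) :=
    hsol.continuous_clampedExtension hε hsol.continuousOn_temp
  have v_cont : Continuous (Function.uncurry v) :=
    hsol.continuous_clampedExtension hε hsol.continuousOn_deriv_temp.neg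
  have W_int (x y : ℝ) : IntervalIntegrable (fun y => W b y - W a y) volume x y :=
    ((continuous_space_slice W_cont b).sub (continuous_space_slice W_cont a)).intervalIntegrable _ _
  have v_int (x : ℝ) : IntervalIntegrable (fun τ => v τ x) volume a b :=
    (continuous_time_slice v_cont x).intervalIntegrable _ _
  have invariant_cont :
      Continuous fun x => (∫ y in (0 : ℝ)..x, (W b y - W a y)) + ∫ τ in a..b, v τ x :=
    (intervalIntegral.continuous_primitive W_int 0).add
      (intervalIntegral.continuous_parametric_intervalIntegral_of_continuous'
        (f := fun x τ => v τ x) (v_cont.comp continuous_swap) a b)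
  have key := eqOn_Icc_of_eq_on_Ioo (hsol.front_pos (hε.trans ha)) invariant_cont
    (fun x₁ x₂ h₁ h₁₂ h₂ => ?_) hx
  · rw [intervalIntegral.integral_sub (v_int _) (v_int _)]
    simp only [intervalIntegral.integral_same] at key
    linarith
  · have heat := hsol.interior_balance_clampedExtension hε ha hab h₁ h₁₂ h₂
    rw [intervalIntegral.integral_sub (v_int _) (v_int _)] at heat
    have hadd := intervalIntegral.integral_add_adjacent_intervals (W_int 0 x₁) (W_int x₁ x₂)
    linarith

lemma stefanFlow (hsol : IsGlobalSol p s₀ φ s u) (hε : 0 < ε) :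
    StefanFlow ε p (fun t => s (max t ε)) (clampedExtension ε s u)
      (clampedExtension ε s fun t x => -deriv (u t) x) where
  continuous_front := hsol.continuous_clampedFront hε
  front_pos t := hsol.front_pos (lt_max_of_lt_right hε)
  monotone_front a b h := hsol.monotoneOn_front (lt_max_of_lt_right hε) (lt_max_of_lt_right hε)
    (max_le_max_right ε h)
  hasDerivAt_front t ht := by
    have hmax : max t ε = t := max_eq_left ht.le
    have hfront := hsol.front_pos (hε.trans ht)
    rw [clampedExtension_of_front_le (by rw [hmax]; exact hfront.le) le_rfl, hmax]
    refine (hsol.hasDerivAt_front (hε.trans ht)).congr_of_eventuallyEq ?_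
    filter_upwards [lt_mem_nhds ht] with τ hτ
    rw [max_eq_left (le_of_lt hτ)]
  continuous_temp := hsol.continuous_clampedExtension hε hsol.continuousOn_temp
  continuous_flux := hsol.continuous_clampedExtension hε hsol.continuousOn_deriv_temp.neg
  temp_nonneg t x := by
    have ht : 0 < max t ε := lt_max_of_lt_right hε
    exact (hsol _ ht).u_nonneg _ (right_mem_Icc.2 ht.le) _
      ⟨le_max_left _ _, max_le (hsol.front_pos ht).le (min_le_right _ _)⟩
  temp_eq_zero t x hx := by
    have ht : 0 < max t ε := lt_max_of_lt_right hε
    rw [clampedExtension_of_front_le (hsol.front_pos ht).le hx]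
    exact (hsol _ ht).bc_free _ (right_mem_Ioc.2 ht)
  hasDerivAt_temp t x hx := by
    have ht : 0 < max t ε := lt_max_of_lt_right hε
    rw [clampedExtension_of_mem (Ioo_subset_Icc_self hx), neg_neg]
    refine ((hsol _ ht).ux_diff _ (right_mem_Ioc.2 ht) x hx).hasDerivAt.congr_of_eventuallyEq ?_
    filter_upwards [isOpen_Ioo.mem_nhds hx] with y hy
    exact clampedExtension_of_mem (Ioo_subset_Icc_self hy)
  flux_zero t := by
    have ht : 0 < max t ε := lt_max_of_lt_right hε
    have hzero := left_mem_Icc.2 (hsol.front_pos ht).le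
    rw [clampedExtension_of_mem hzero, clampedExtension_of_mem hzero]
    exact (hsol _ ht).bc_zero _ (right_mem_Ioc.2 ht)
  balance a b ha hab x hx :=
    hsol.balance_clampedExtension hε ha hab (by rwa [max_eq_left ha.le] at hx)

lemma L1Norm_clampedExtension (hsol : IsGlobalSol p s₀ φ s u) (hε : 0 < ε) {t : ℝ} (ht : ε ≤ t) :
    L1Norm (fun t => s (max t ε)) (clampedExtension ε s u) t = L1Norm s u t := by
  simp only [L1Norm, max_eq_left ht]
  refine intervalIntegral.integral_congr fun x hx => ?_
  rw [uIcc_of_le (hsol.front_pos (hε.trans_le ht)).le] at hx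
  exact hsol.clampedExtension_of_le hε u ht le_rfl hx

lemma energy_clampedExtension (hsol : IsGlobalSol p s₀ φ s u) (hε : 0 < ε) {t : ℝ} (ht : ε ≤ t) :
    energy p (fun t => s (max t ε)) (clampedExtension ε s u) t = energy p s u t := by
  have hs : 0 ≤ s t := (hsol.front_pos (hε.trans_le ht)).le
  rw [(hsol.stefanFlow hε).energy_eq, energy, dirichletIntegral, max_eq_left ht,
    hsol.clampedExtension_of_le hε u ht le_rfl (left_mem_Icc.2 hs)]
  congr 2
  refine intervalIntegral.integral_congr fun x hx => ?_
  rw [uIcc_of_le hs] at hx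
  simp only [hsol.clampedExtension_of_le hε _ ht le_rfl hx, neg_sq]

lemma exists_interior_initial_pos (hsol : IsGlobalSol p s₀ φ s u)
    (hφ : ∃ x ∈ Icc 0 s₀, φ x ≠ 0) : ∃ x ∈ Ioo 0 s₀, 0 < u 0 x := by
  have H := hsol 1 one_pos
  have h0 : (0 : ℝ) ∈ Icc 0 1 := left_mem_Icc.2 zero_le_one
  have hcont : ContinuousOn (u 0) (Icc 0 s₀) :=
    H.u_cont.comp (f := fun x => (0, x)) (by fun_prop) fun x hx => ⟨h0, H.init_s.symm ▸ hx⟩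
  obtain ⟨y, hy, hφy⟩ := hφ
  by_contra! hnonpos
  have hle : u 0 y ≤ 0 := by
    have hs₀ : 0 < s₀ := H.init_s ▸ H.s_pos 0 h0
    refine le_on_closure (f := u 0) (g := 0) (s := Ioo 0 s₀) hnonpos ?_ continuousOn_const ?_
    · rwa [closure_Ioo hs₀.ne]
    · rwa [closure_Ioo hs₀.ne]
  exact hφy (H.init y hy ▸ hle.antisymm (H.u_nonneg 0 h0 y (H.init_s.symm ▸ hy)))

lemma exists_temp_pos (hsol : IsGlobalSol p s₀ φ s u) (hφ : ∃ x ∈ Icc 0 s₀, φ x ≠ 0) {t : ℝ}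
    (ht : 0 < t) : ∃ a ∈ Ioo 0 t, ∃ x ∈ Ioo 0 (s a), 0 < u a x := by
  obtain ⟨x, hx, hux⟩ := hsol.exists_interior_initial_pos hφ
  have H := hsol t ht
  have hIcc : Icc 0 t ∈ 𝓝[>] 0 := mem_of_superset (Ioo_mem_nhdsGT ht) Ioo_subset_Icc_self
  have ev_front : ∀ᶠ a in 𝓝[>] (0 : ℝ), x < s a :=
    ((H.s_cont 0 (left_mem_Icc.2 ht.le)).mono_of_mem_nhdsWithin hIcc).eventually_const_lt
      (H.init_s.symm ▸ hx.2)
  have ev_temp : ∀ᶠ a in 𝓝[>] (0 : ℝ), 0 < u a x := by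
    have h0 : ((0 : ℝ), x) ∈ {q : ℝ × ℝ | q.1 ∈ Icc 0 t ∧ q.2 ∈ Icc 0 (s q.1)} :=
      ⟨left_mem_Icc.2 ht.le, hx.1.le, H.init_s.symm ▸ hx.2.le⟩
    refine ((H.u_cont _ h0).tendsto.comp (f := fun a => (a, x))
      (tendsto_nhdsWithin_iff.2 ⟨?_, ?_⟩)).eventually_const_lt hux
    · exact (Continuous.tendsto (by fun_prop) 0).mono_left nhdsWithin_le_nhds
    · filter_upwards [hIcc, ev_front] with a ha has using ⟨ha, hx.1.le, le_of_lt has⟩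
  obtain ⟨a, ha, has, hua⟩ :=
    ((Filter.eventually_mem_set.2 (Ioo_mem_nhdsGT ht)).and (ev_front.and ev_temp)).exists
  exact ⟨a, ha, x, ⟨hx.1, has⟩, hua⟩

lemma le_energy (hsol : IsGlobalSol p s₀ φ s u) (hp : 1 < p) {t : ℝ} (ht : 0 < t) :
    π ^ 2 / 256 * L1Norm s u t ^ 3 / (s t + L1Norm s u t) ^ 4 ≤ energy p s u t := by
  have hε : 0 < t / 2 := half_pos ht
  have key := (hsol.stefanFlow hε).le_energy hp (half_lt_self ht)
  rwa [hsol.L1Norm_clampedExtension hε (half_le_self ht.le),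
    hsol.energy_clampedExtension hε (half_le_self ht.le), max_eq_left (half_le_self ht.le)] at key

lemma L1Norm_pos (hsol : IsGlobalSol p s₀ φ s u) (hφ : ∃ x ∈ Icc 0 s₀, φ x ≠ 0) {t : ℝ}
    (ht : 0 < t) : 0 < L1Norm s u t := by
  obtain ⟨a, ⟨ha, hat⟩, x, hx, hux⟩ := hsol.exists_temp_pos hφ ht
  have hε : 0 < a / 2 := half_pos ha
  have hmax : max a (a / 2) = a := max_eq_left (half_le_self ha.le)
  rw [← hsol.L1Norm_clampedExtension hε ((half_le_self ha.le).trans hat.le)]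
  refine (hsol.stefanFlow hε).L1Norm_pos (half_lt_self ha) hat.le (hmax.symm ▸ hx) ?_
  rwa [hsol.clampedExtension_of_le hε u (half_le_self ha.le) le_rfl (Ioo_subset_Icc_self hx)]

end IsGlobalSol

theorem stmt_0_general (p : ℝ) (hp : 1 < p) (s₀ : ℝ) (φ : ℝ → ℝ)
    (hφ : ∃ x ∈ Icc 0 s₀, φ x ≠ 0) (s : ℝ → ℝ) (u : ℝ → ℝ → ℝ) (hsol : IsGlobalSol p s₀ φ s u) :
    ∀ t : ℝ, 0 < t →
      π ^ 2 / 256 * (L1Norm s u t) ^ 3 / (s t + L1Norm s u t) ^ 4 ≤ energy p s u t ∧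
      0 < π ^ 2 / 256 * (L1Norm s u t) ^ 3 / (s t + L1Norm s u t) ^ 4 := by
  intro t ht
  have hs := hsol.front_pos ht
  have hM := hsol.L1Norm_pos hφ ht
  exact ⟨hsol.le_energy hp ht, by positivity⟩

/-- Theorem 1.1 (1): positivity of the energy of global-in-time solutions. -/
theorem stmt_0 (p : ℝ) (hp : 1 < p) (s₀ : ℝ) (φ : ℝ → ℝ) (hW : memW s₀ φ)
    (s : ℝ → ℝ) (u : ℝ → ℝ → ℝ) (hsol : IsGlobalSol p s₀ φ s u) :
    ∀ t : ℝ, 0 < t →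
      π ^ 2 / 256 * (L1Norm s u t) ^ 3 / (s t + L1Norm s u t) ^ 4 ≤ energy p s u t ∧
      0 < π ^ 2 / 256 * (L1Norm s u t) ^ 3 / (s t + L1Norm s u t) ^ 4 :=
  stmt_0_general p hp s₀ φ hW.2.2.1 s u hsol
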